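/- arXiv:2604.27424 — 2 statements merged into one kernel-verified Lean document; each statement's English description precedes it below -/
import Mathlib

section
/- For all integers k ≥ 1 and n ≥ 1, the minimum of mdi_k(T) over all trees T on n vertices equals f_k(n); that is, every tree on n vertices has at least f_k(n) maximal distance-k independent sets, and there exists a tree on n vertices with exactly f_k(n) maximal distance-k independent sets. -/
/-- `J` is a distance-`k` independent set in `G`: any two distinct vertices of `J`
are at graph distance at least `k + 1`. -/
def DkIndep {V : Type*} (G : SimpleGraph V) (k : ℕ) (J : Set V) : Prop :=
  ∀ ⦃u⦄, u ∈ J → ∀ ⦃v⦄, v ∈ J → u ≠ v → k + 1 ≤ G.dist u v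

/-- `J` is a maximal distance-`k` independent set (`k`-MDIS) of `G`. -/
def MaxDkIndep {V : Type*} (G : SimpleGraph V) (k : ℕ) (J : Set V) : Prop :=
  DkIndep G k J ∧ ∀ J', DkIndep G k J' → J ⊆ J' → J' = J

/-- `mdi G k` is the number of maximal distance-`k` independent sets of `G`. -/
noncomputable def mdi {V : Type*} (G : SimpleGraph V) (k : ℕ) : ℕ :=
  {J : Set V | MaxDkIndep G k J}.ncard

/-- `f_k(n)` from the paper. -/
def fk (k n : ℕ) : ℕ :=
  if n ≤ k + 1 then n else n - (n - k % 2) / (k / 2 + 1) + 1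

/-- closed ball `N_k[x]`. -/
def ball {V : Type*} (G : SimpleGraph V) (k : ℕ) (x : V) : Set V :=
  {v | G.dist x v ≤ k}

/-- a leaf is a vertex of degree 1. -/
def IsLeaf {V : Type*} (G : SimpleGraph V) (v : V) : Prop :=
  (G.neighborSet v).ncard = 1

/-- eccentricity of a vertex. -/
noncomputable def ecc {V : Type*} [Fintype V] (G : SimpleGraph V) (v : V) : ℕ :=
  Finset.univ.sup (G.dist v)

/-- diameter of a finite graph. -/
noncomputable def gdiam {V : Type*} [Fintype V] (G : SimpleGraph V) : ℕ :=
  Finset.univ.sup (ecc G)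

/-- a central vertex is one of minimum eccentricity. -/
def IsCentral {V : Type*} [Fintype V] (G : SimpleGraph V) (v : V) : Prop :=
  ∀ u, ecc G v ≤ ecc G u

/-- a `k`-twin: some other vertex has the same closed `k`-ball. -/
def KTwin {V : Type*} (G : SimpleGraph V) (k : ℕ) (u : V) : Prop :=
  ∃ v, v ≠ u ∧ ball G k u = ball G k v

/-- a diametral leaf: a leaf whose eccentricity equals the diameter. -/
def IsDiametralLeaf {V : Type*} [Fintype V] (G : SimpleGraph V) (u : V) : Prop :=
  IsLeaf G u ∧ ecc G u = gdiam G

/-- a `k`-special pair. -/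
def KSpecial {V : Type*} [Fintype V] (G : SimpleGraph V) (k : ℕ) (x y : V) : Prop :=
  IsDiametralLeaf G x ∧ IsDiametralLeaf G y ∧ KTwin G k x ∧ KTwin G k y ∧
    ball G k x ≠ ball G k y

/-- `mdi*_k(G, ℓ)`. -/
noncomputable def mdiStar {V : Type*} (G : SimpleGraph V) (k : ℕ) (ℓ : V) : ℕ :=
  {J : Set V | MaxDkIndep G k J ∧ ℓ ∈ J ∧ ∃ w ∉ J, ball G k w ∩ J = {ℓ}}.ncard

/-- The spider tree `S_{p,m}`: a center (`none`) together with `p` legs of `m` vertices. -/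
def spider (p m : ℕ) : SimpleGraph (Option (Fin p × Fin m)) :=
  SimpleGraph.fromRel fun a b =>
    match a, b with
    | none, some (_, j) => (j : ℕ) = 0
    | some (i, j), some (i', j') => i = i' ∧ (j : ℕ) + 1 = (j' : ℕ)
    | _, _ => False

/-- `S'_{p,m}`: the spider `S_{p,m}` with one leaf at distance `m` from the center removed. -/
def spider' (p m : ℕ) (hp : 0 < p) (hm : 0 < m) :=
  (spider p m).induce
    {v | v ≠ some (⟨0, hp⟩, ⟨m - 1, Nat.sub_lt hm Nat.one_pos⟩)}

/-- The double spider `B_{p₁,p₂,s}`: two adjacent centers (`Sum.inl false`, `Sum.inl true`),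
with `p₁` legs of `s` vertices on the first and `p₂` legs of `s` vertices on the second. -/
def btree (p₁ p₂ s : ℕ) : SimpleGraph (Bool ⊕ ((Fin p₁ ⊕ Fin p₂) × Fin s)) :=
  SimpleGraph.fromRel fun a b =>
    match a, b with
    | Sum.inl x, Sum.inl y => x ≠ y
    | Sum.inl false, Sum.inr (Sum.inl _, j) => (j : ℕ) = 0
    | Sum.inl true, Sum.inr (Sum.inr _, j) => (j : ℕ) = 0
    | Sum.inr (c, j), Sum.inr (c', j') => c = c' ∧ (j : ℕ) + 1 = (j' : ℕ)
    | _, _ => False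

/-- `G` contains a subgraph isomorphic to `H`. -/
def ContainsSub {V W : Type*} (G : SimpleGraph V) (H : SimpleGraph W) : Prop :=
  ∃ f : W → V, Function.Injective f ∧ ∀ a b, H.Adj a b → G.Adj (f a) (f b)

/-- A pendant path on `s` vertices `P 0, …, P (s-1)` attached to `w`:
`P 0` is a leaf, consecutive vertices are adjacent, interior vertices have degree 2,
and `P (s-1)` is adjacent to `w`. -/
def IsPendantPath {V : Type*} (T : SimpleGraph V) (s : ℕ) (P : ℕ → V) (w : V) : Prop :=
  Set.InjOn P (Set.Iio s) ∧ (∀ i < s, P i ≠ w) ∧ IsLeaf T (P 0) ∧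
    (∀ i, i + 1 < s → T.Adj (P i) (P (i + 1))) ∧
    (∀ i, 0 < i → i < s → (T.neighborSet (P i)).ncard = 2) ∧
    T.Adj (P (s - 1)) w

/-- Isomorphism of simple graphs on `Fin n` as a setoid. -/
def graphSetoid (n : ℕ) : Setoid (SimpleGraph (Fin n)) where
  r G H := Nonempty (G ≃g H)
  iseqv := ⟨fun _ => ⟨SimpleGraph.Iso.refl⟩, fun ⟨e⟩ => ⟨e.symm⟩, fun ⟨e⟩ ⟨f⟩ => ⟨e.trans f⟩⟩

/-- The number of isomorphism classes of graphs in a set of graphs on `Fin n`. -/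
noncomputable def numIsoClasses {n : ℕ} (S : Set (SimpleGraph (Fin n))) : ℕ :=
  ((fun G => Quotient.mk (graphSetoid n) G) '' S).ncard


structure TM {V : Type} (d : V → V → ℕ) : Prop where
  self : ∀ x, d x x = 0
  eq : ∀ x y, d x y = 0 → x = y
  symm : ∀ x y, d x y = d y x
  tri : ∀ x y z, d x z ≤ d x y + d y z
  four : ∀ x y z w, d x y + d z w ≤ d x z + d y w ∨ d x y + d z w ≤ d x w + d y z
  par : ∀ x y z, (d x y + d y z + d x z) % 2 = 0

def Ind {V : Type} (d : V → V → ℕ) (k : ℕ) (J : Finset V) : Prop :=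
  ∀ u ∈ J, ∀ v ∈ J, d u v ≤ k → u = v

def Mx {V : Type} (d : V → V → ℕ) (k : ℕ) (A J : Finset V) : Prop :=
  J ⊆ A ∧ Ind d k J ∧ ∀ v ∈ A, (∀ u ∈ J, d u v ≤ k → u = v) → v ∈ J

open Classical in
noncomputable def MM {V : Type} (d : V → V → ℕ) (k : ℕ) (A : Finset V) : Finset (Finset V) :=
  A.powerset.filter (Mx d k A)

theorem mem_MM {V : Type} (d : V → V → ℕ) (k : ℕ) (A J : Finset V) :
    J ∈ MM d k A ↔ Mx d k A J := by
  classical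
  simp only [MM, Finset.mem_filter, Finset.mem_powerset]
  exact ⟨fun h => h.2, fun h => ⟨h.1, h⟩⟩

theorem ext_max {V : Type} {d : V → V → ℕ} (hd : TM d) (k : ℕ) (A J : Finset V) (hJ : J ⊆ A)
    (hi : Ind d k J) : ∃ K, J ⊆ K ∧ Mx d k A K := by
  classical
  obtain ⟨K, hK, hm⟩ := Finset.exists_max_image
    (A.powerset.filter (fun K => J ⊆ K ∧ Ind d k K)) Finset.card
    ⟨J, by simp [hJ, hi]⟩
  simp only [Finset.mem_filter, Finset.mem_powerset] at hK hm
  refine ⟨K, hK.2.1, hK.1, hK.2.2, fun v hv h => ?_⟩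
  by_contra hvK
  have := hm (insert v K) ⟨Finset.insert_subset hv hK.1,
    hK.2.1.trans (Finset.subset_insert _ _), ?_⟩
  · rw [Finset.card_insert_of_notMem hvK] at this
    omega
  · intro a ha b hb hab
    rw [Finset.mem_insert] at ha hb
    rcases ha with rfl | ha <;> rcases hb with rfl | hb
    · rfl
    · exact (h b hb (by rw [hd.symm]; exact hab)).symm
    · exact h a ha hab
    · exact hK.2.2 a ha b hb hab

section
open Classical

theorem up_max {V : Type} {d : V → V → ℕ} (hd : TM d) (k : ℕ) (A : Finset V) (l : V) (hl : l ∈ A)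
    (J : Finset V) (hJ : Mx d k (A.erase l) J) :
    Mx d k A (if ∀ u ∈ J, d u l ≤ k → u = l then insert l J else J) := by
  obtain ⟨h1, h2, h3⟩ := hJ
  have h1' : J ⊆ A := h1.trans (Finset.erase_subset _ _)
  split_ifs with h
  · refine ⟨Finset.insert_subset hl h1', ?_, ?_⟩
    · intro a ha b hb hab
      rw [Finset.mem_insert] at ha hb
      rcases ha with rfl | ha <;> rcases hb with rfl | hb
      · rfl
      · exact (h b hb (by rw [hd.symm]; exact hab)).symm
      · exact h a ha hab
      · exact h2 a ha b hb hab
    · intro v hv h4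
      by_cases hvl : v = l
      · simp [hvl]
      · exact Finset.mem_insert_of_mem (h3 v (Finset.mem_erase.2 ⟨hvl, hv⟩)
          fun u hu => h4 u (Finset.mem_insert_of_mem hu))
  · refine ⟨h1', h2, fun v hv h4 => ?_⟩
    by_cases hvl : v = l
    · subst hvl; exact absurd h4 h
    · exact h3 v (Finset.mem_erase.2 ⟨hvl, hv⟩) h4

theorem mm_image {V : Type} {d : V → V → ℕ} (hd : TM d) (k : ℕ) (A : Finset V) (l : V)
    (hl : l ∈ A) : ∃ F : Finset V → Finset V, (∀ J ∈ MM d k (A.erase l), F J ∈ MM d k A) ∧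
      (∀ J ∈ MM d k (A.erase l), (F J).erase l = J) := by
  refine ⟨fun J => if ∀ u ∈ J, d u l ≤ k → u = l then insert l J else J, ?_, ?_⟩
  · intro J hJ
    rw [mem_MM] at hJ ⊢
    exact up_max hd k A l hl J hJ
  · intro J hJ
    rw [mem_MM] at hJ
    have : l ∉ J := fun h => by simpa using hJ.1 h
    dsimp only
    split_ifs
    · exact Finset.erase_insert this
    · exact Finset.erase_eq_of_notMem this

theorem mm_mono {V : Type} {d : V → V → ℕ} (hd : TM d) (k : ℕ) (A : Finset V) (l : V)
    (hl : l ∈ A) : (MM d k (A.erase l)).card ≤ (MM d k A).card := by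
  obtain ⟨F, h1, h2⟩ := mm_image hd k A l hl
  refine Finset.card_le_card_of_injOn F h1 ?_
  intro J hJ K hK h
  rw [← h2 J hJ, ← h2 K hK, h]

theorem mm_gain {V : Type} {d : V → V → ℕ} (hd : TM d) (k : ℕ) (A : Finset V) (l : V)
    (hl : l ∈ A) (J : Finset V) (hJ : Mx d k A J) (w : V) (hw : w ∈ A) (hwl : w ≠ l)
    (h : ∀ y ∈ J, d w y ≤ k → y = l) :
    (MM d k (A.erase l)).card + 1 ≤ (MM d k A).card := by
  obtain ⟨F, h1, h2⟩ := mm_image hd k A l hl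
  have hinj : Set.InjOn F (MM d k (A.erase l)) := by
    intro J hJ K hK h
    rw [← h2 J hJ, ← h2 K hK, h]
  rw [← Finset.card_image_of_injOn hinj]
  have hn : J ∉ (MM d k (A.erase l)).image F := by
    intro hc
    obtain ⟨K, hK, rfl⟩ := Finset.mem_image.1 hc
    have hK2 := h2 K hK
    rw [mem_MM] at hK
    have : w ∈ K := by
      refine hK.2.2 w (Finset.mem_erase.2 ⟨hwl, hw⟩) ?_
      intro u hu hdu
      rw [← hK2, Finset.mem_erase] at hu
      exact absurd (h u hu.2 (by rw [hd.symm]; exact hdu)) hu.1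
    rw [← hK2, Finset.mem_erase] at this
    exact hwl (h w this.2 (by rw [hd.self]; omega))
  rw [← Finset.card_insert_of_notMem hn]
  apply Finset.card_le_card
  intro K hK
  rw [Finset.mem_insert] at hK
  rcases hK with rfl | hK
  · exact (mem_MM ..).2 hJ
  · obtain ⟨K', hK', rfl⟩ := Finset.mem_image.1 hK
    exact h1 K' hK'

theorem mm_gain' {V : Type} {d : V → V → ℕ} (hd : TM d) (k : ℕ) (A : Finset V) (l : V)
    (hl : l ∈ A) (w : V) (hw : w ∈ A) (hwl : w ≠ l)
    (h : ∀ z ∈ A, d w z ≤ k → d l z ≤ k) :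
    (MM d k (A.erase l)).card + 1 ≤ (MM d k A).card := by
  obtain ⟨J, h1, h2⟩ := ext_max hd k A {l} (by simpa using hl) (by
    intro a ha b hb _; simp at ha hb; rw [ha, hb])
  refine mm_gain hd k A l hl J h2 w hw hwl ?_
  intro y hy hwy
  exact (h2.2.1 l (h1 (by simp)) y hy (h y (h2.1 hy) hwy)).symm

theorem mm_small {V : Type} {d : V → V → ℕ} (hd : TM d) (k : ℕ) (A : Finset V)
    (h : ∀ x ∈ A, ∀ y ∈ A, d x y ≤ k) : A.card ≤ (MM d k A).card := by
  refine Finset.card_le_card_of_injOn (fun x => {x}) ?_ ?_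
  · intro x hx
    refine (mem_MM ..).2 ⟨by simpa using hx, ?_, ?_⟩
    · intro a ha b hb _; simp at ha hb; rw [ha, hb]
    · intro v hv h1
      have := h1 x (by simp) (h x hx v hv)
      simp [this]
  · intro x _ y _ h
    simpa using h

end

def Good {V : Type} (d : V → V → ℕ) (A : Finset V) : Prop :=
  ∀ x ∈ A, ∀ y ∈ A, ∀ i, i ≤ d x y → ∃ z ∈ A, d x z = i ∧ d z y = d x y - i

def Lf {V : Type} (d : V → V → ℕ) (A : Finset V) (l : V) : Prop :=
  ∀ u ∈ A, ∀ v ∈ A, u ≠ l → v ≠ l → d u v ≠ d u l + d l v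

open Classical in
theorem good_erase {V : Type} {d : V → V → ℕ} (A : Finset V) (l : V)
    (hg : Good d A) (hl : Lf d A l) : Good d (A.erase l) := by
  intro x hx y hy i hi
  rw [Finset.mem_erase] at hx hy
  obtain ⟨z, hz, h1, h2⟩ := hg x hx.2 y hy.2 i hi
  refine ⟨z, Finset.mem_erase.2 ⟨?_, hz⟩, h1, h2⟩
  rintro rfl
  exact hl x hx.2 y hy.2 hx.1 hy.1 (by omega)

/-- one of two vertices around `y` is a descendant of `y`. -/
theorem desc {V : Type} {d : V → V → ℕ} (hd : TM d) (r y u v : V) (h : d u v = d u y + d y v) :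
    d r u = d r y + d y u ∨ d r v = d r y + d y v := by
  have := hd.four r y u v
  have := hd.tri r y u
  have := hd.tri r y v
  have := hd.symm u y
  omega

theorem nondesc {V : Type} {d : V → V → ℕ} (hd : TM d) (r p a z : V) (h : d r p = d r a + d a p)
    (hz : d r z < d r a + d a z) : d p z = d p a + d a z := by
  have := hd.four r p a z
  have := hd.tri p a z
  have := hd.symm p a
  omega

/-- structure of the end of the tree. -/
theorem struct1 {V : Type} {d : V → V → ℕ} (hd : TM d) (k s : ℕ) (hs : 2 * s ≤ k)
    (A : Finset V) (r p a : V) (hp : p ∈ A) (D : ℕ)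
    (hD : ∀ z ∈ A, d r z ≤ D) (hrp : d r p = D) (hpa : d p a = s) (har : d r a + s = D)
    (hno : ¬ ∃ y ∈ A, Lf d A y ∧ ∃ w ∈ A, w ≠ y ∧ ∀ z ∈ A, d w z ≤ k → d y z ≤ k) :
    ∀ y ∈ A, d r y = d r a + d a y → d p y + d y a = s := by
  classical
  by_contra hcon
  push Not at hcon
  obtain ⟨y0, hy0, hy0'⟩ := hcon
  obtain ⟨y, hy, hmax⟩ := Finset.exists_max_image
    (A.filter (fun y => d r y = d r a + d a y ∧ d p y + d y a ≠ s)) (d r)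
    ⟨y0, by simp [hy0, hy0']⟩
  simp only [Finset.mem_filter] at hy hmax
  obtain ⟨hyA, hy1, hy2⟩ := hy
  have hap := hd.symm a p
  have key : ∀ u ∈ A, u ≠ y → d r u ≠ d r y + d y u := by
    intro u hu huy h
    have h0 : d y u ≠ 0 := fun h => huy (hd.eq _ _ h).symm
    have e1 := hd.tri r a u
    have e2 := hd.tri a y u
    have h3 := hmax u
    have h4 := hd.tri p u y
    have h5 := hd.tri p y a
    have := hd.symm u y
    have := hd.symm u a
    have := hd.symm y a
    by_cases h6 : d p u + d u a = s
    · omega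
    · have := h3 ⟨hu, by omega, h6⟩
      omega
  apply hno
  refine ⟨y, hyA, ?_, p, hp, ?_, ?_⟩
  · intro u hu v hv huy hvy h
    rcases desc hd r y u v h with h | h
    · exact key u hu huy h
    · exact key v hv hvy h
  · rintro rfl
    rw [hd.self] at hy2
    omega
  · intro z hz hpz
    have e1 := hD z hz
    have e2 := hD y hyA
    have e3 := hd.tri y a z
    have e4 := hd.symm y a
    have e5 := hd.tri r a z
    by_cases h : d r z = d r a + d a z
    · omega
    · have := nondesc hd r p a z (by omega) (by omega)
      omega

open Classical in
theorem struct2 {V : Type} {d : V → V → ℕ} (hd : TM d) (k : ℕ)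
    (A : Finset V) (r p : V) (hp : p ∈ A) (hr : r ∈ A) (D : ℕ) (hg : Good d A)
    (hD : ∀ y ∈ A, d r y ≤ D) (hrp : d r p = D) (hDk : k + 2 ≤ D)
    (hno : ∀ y ∈ A, Lf d A y → ¬ ((MM d k (A.erase y)).card + 1 ≤ (MM d k A).card)) :
    ∃ x ∈ A, d p x = k + 1 ∧ d r x + 1 = D + k % 2 ∧
      ∀ z ∈ A, d p z = k + 2 → k < d x z := by
  have hpr : d p r = D := by rw [hd.symm]; exact hrp
  have hlf : Lf d A p := by
    intro u hu v hv hup hvp h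
    have h1 : d p u ≠ 0 := fun h => hup (hd.eq _ _ h).symm
    have h2 : d p v ≠ 0 := fun h => hvp (hd.eq _ _ h).symm
    have := hD u hu
    have := hD v hv
    rcases desc hd r p u v h with h | h <;> omega
  have h1 : ∃ x ∈ A, d p x = k + 1 ∧ ∀ z ∈ A, d p z = k + 2 → k < d x z := by
    by_contra hcon
    push Not at hcon
    apply hno p hp hlf
    obtain ⟨J0, -, hJ0⟩ := ext_max hd k (A.filter (fun z => d p z = k + 2)) ∅ (by simp)
      (by intro a ha; simp at ha)
    obtain ⟨J, hJ1, hJ⟩ := ext_max hd k A (insert p J0)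
      (Finset.insert_subset hp (hJ0.1.trans (Finset.filter_subset _ _))) (by
        intro a ha b hb hab
        rw [Finset.mem_insert] at ha hb
        rcases ha with rfl | ha <;> rcases hb with rfl | hb
        · rfl
        · have := hJ0.1 hb
          simp at this
          omega
        · have := hJ0.1 ha
          simp at this
          rw [hd.symm] at hab
          omega
        · exact hJ0.2.1 a ha b hb hab)
    obtain ⟨w, hw, hw1, hw2⟩ := hg p hp r hr 1 (by omega)
    refine mm_gain hd k A p hp J hJ w hw ?_ ?_
    · rintro rfl
      rw [hd.self] at hw1
      omega
    · intro y hy hwy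
      by_contra hyp
      have e1 : k < d p y := by
        by_contra h
        exact hyp (hJ.2.1 p (hJ1 (by simp)) y hy (by omega)).symm
      have e2 := hd.tri p w y
      obtain ⟨z, hz, hz1, hz2⟩ := hcon y (hJ.1 hy) (by omega)
      have : ∃ z' ∈ J0, d z' z ≤ k := by
        by_contra h
        push Not at h
        have := h z (hJ0.2.2 z (by simp [hz, hz1]) (fun u hu h' => by
          have := h u hu
          omega))
        rw [hd.self] at this
        omega
      obtain ⟨z', hz', hzz⟩ := this
      have hz'1 : d p z' = k + 2 := by
        have := hJ0.1 hz'
        simp at this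
        exact this.2
      have e3 := hd.four y z' p z
      have e4 := hd.symm y p
      have e5 := hd.symm z' p
      have := hJ.2.1 y hy z' (hJ1 (by simp [hz'])) (by omega)
      subst this
      omega
  obtain ⟨x, hx, hx1, hx2⟩ := h1
  refine ⟨x, hx, hx1, ?_, hx2⟩
  obtain ⟨z, hz, hz1, hz2⟩ := hg p hp r hr (k + 2) (by omega)
  have e1 := hx2 z hz hz1
  have e2 := hd.four x z p r
  have e3 := hD x hx
  have e4 := hd.par p x r
  have e5 := hd.symm x r
  have e6 := hd.symm z p
  have e7 := hd.symm x p
  omega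

/-- the neighbourhood of the special vertex. -/
theorem struct3 {V : Type} {d : V → V → ℕ} (hd : TM d) (k s : ℕ) (hs : k = 2 * s + k % 2)
    (A : Finset V) (r p x q : V) (hr : r ∈ A) (D : ℕ) (hg : Good d A) (hk : 1 ≤ k)
    (hD : ∀ z ∈ A, d r z ≤ D) (hrp : d r p = D) (hDk : k + 2 ≤ D)
    (hno : ¬ ∃ y ∈ A, Lf d A y ∧ ∃ w ∈ A, w ≠ y ∧ ∀ z ∈ A, d w z ≤ k → d y z ≤ k)
    (hx : x ∈ A) (hx1 : d p x = k + 1) (hx2 : d r x + 1 = D + k % 2)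
    (hx3 : ∀ z ∈ A, d p z = k + 2 → k < d x z)
    (hq1 : d p q = s + 1) (hq2 : d r q + s + 1 = D)
    (i : ℕ) (hi : 1 ≤ i) (y : V) (hy : d y q + i ≤ s + 1) :
    ∀ z ∈ A, d x z ≤ k → d y z ≤ k := by
  intro z hz hxz
  have hxq : d x q = s + k % 2 := by
    have e1 := hd.four x q p r
    have e2 := hd.symm x p
    have e3 := hd.symm q r
    have e4 := hd.symm x r
    have e5 := hd.symm q p
    have e6 := hd.tri p q x
    have e7 := hd.symm x q
    have e8 := hd.symm p r
    omega
  have hqx := hd.symm q x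
  have t := hd.tri y q z
  by_cases hdz : d r z = d r q + d q z
  · have := hD z hz
    by_contra hcon
    have h1 : d q z = s + 1 := by omega
    have h2 : k % 2 = 0 := by omega
    have h3 : d r z = D := by omega
    have ezr := hd.symm z r
    obtain ⟨c, hc, hc1, hc2⟩ := hg z hz r hr s (by omega)
    have ecr := hd.symm c r
    have S := struct1 hd k s (by omega) A r z c hz D hD h3 hc1 (by omega) hno x hx
    have ecx := hd.symm c x
    have ezx := hd.symm z x
    have erx := hd.symm r x
    have par1 := hd.par z x r
    have epz := hd.symm p z
    by_cases hxc : d r x = d r c + d c x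
    · have S' := S hxc
      have e1 := hx3 z hz
      have e2 := hd.par p x z
      have e3 := hd.four p x q z
      have e4 := hd.tri p x z
      have e5 := hd.tri p z x
      omega
    · have e0 := hd.tri r c x
      have e1 := nondesc hd r z c x (by have := hd.symm c z; omega) (by omega)
      omega
  · have e1 := hd.tri r q z
    have e2 := nondesc hd r x q z (by have := hd.symm r x; omega) (by omega)
    omega

open Classical in
theorem chain {V : Type} {d : V → V → ℕ} (hd : TM d) (k s : ℕ) (hs : k = 2 * s + k % 2)
    (A : Finset V) (r p : V) (hp : p ∈ A) (hr : r ∈ A) (D : ℕ) (hg : Good d A) (hk : 1 ≤ k)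
    (hD : ∀ y ∈ A, ∀ z ∈ A, d y z ≤ D) (hrp : d r p = D) (hDk : k + 1 ≤ D)
    (hno : ∀ y ∈ A, Lf d A y → ¬ ((MM d k (A.erase y)).card + 1 ≤ (MM d k A).card)) :
    ∃ B ⊆ A, Good d B ∧ r ∈ B ∧ B.card + s + 1 = A.card ∧ (MM d k B).card + s ≤ (MM d k A).card := by
  have hDr : ∀ y ∈ A, d r y ≤ D := fun y hy => hD r hr y hy
  have hno' : ¬ ∃ y ∈ A, Lf d A y ∧ ∃ w ∈ A, w ≠ y ∧ ∀ z ∈ A, d w z ≤ k → d y z ≤ k := by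
    rintro ⟨y, hy, h1, w, hw, hwy, h2⟩
    exact hno y hy h1 (mm_gain' hd k A y hy w hw hwy h2)
  have hpr : d p r = D := by rw [hd.symm]; exact hrp
  have hP : ∀ i, ∃ z, i ≤ D → z ∈ A ∧ d p z = i ∧ d r z + i = D := by
    intro i
    by_cases hi : i ≤ D
    · obtain ⟨z, hz, h1, h2⟩ := hg p hp r hr i (by omega)
      exact ⟨z, fun _ => ⟨hz, h1, by rw [hd.symm]; omega⟩⟩
    · exact ⟨p, fun h => absurd h hi⟩
  choose P hP using hP
  have hPP : ∀ i j, i ≤ j → j ≤ D → d (P i) (P j) = j - i := by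
    intro i j hij hj
    obtain ⟨-, h1, h2⟩ := hP i (by omega)
    obtain ⟨-, h3, h4⟩ := hP j hj
    have e1 := hd.four (P i) (P j) p r
    have e2 := hd.symm (P i) p
    have e3 := hd.symm (P j) p
    have e4 := hd.symm (P i) r
    have e5 := hd.symm (P j) r
    have e6 := hd.tri p (P i) (P j)
    omega
  have hPinj : ∀ i j, i ≤ D → j ≤ D → P i = P j → i = j := by
    intro i j hi hj h
    obtain ⟨-, h1, h2⟩ := hP i hi
    obtain ⟨-, h3, h4⟩ := hP j hj
    rw [h] at h1
    omega
  obtain ⟨hsA, hs1, hs2⟩ := hP s (by omega)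
  -- descendants of P s
  have S : ∀ y ∈ A, d r y = d r (P s) + d (P s) y → ∃ j ≤ s, y = P j := by
    intro y hy h
    have h1 := struct1 hd k s (by omega) A r p (P s) hp D hDr hrp hs1 hs2 hno' y hy h
    refine ⟨d p y, by omega, ?_⟩
    obtain ⟨-, h2, h3⟩ := hP (d p y) (by omega)
    apply hd.eq
    have h4 := hPP (d p y) s (by omega) (by omega)
    have e1 := hd.four y (P (d p y)) p (P s)
    have e2 := hd.symm y p
    have e3 := hd.symm (P (d p y)) p
    omega
  have hW : 1 ≤ s → ∃ w ∈ A, (∀ j ≤ s, w ≠ P j) ∧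
      ∀ i, 1 ≤ i → i ≤ s → ∀ z ∈ A, (∀ j < i, z ≠ P j) → d w z ≤ k → d (P i) z ≤ k := by
    intro hs0
    by_cases hDk1 : D = k + 1
    · refine ⟨r, hr, ?_, ?_⟩
      · intro j hj h
        have := (hP j (by omega)).2.2
        rw [← h, hd.self] at this
        omega
      · intro i hi his z hz hzj _
        by_cases hzd : d r z = d r (P s) + d (P s) z
        · obtain ⟨j, hj, rfl⟩ := S z hz hzd
          have : ¬ j < i := fun h => hzj j h rfl
          rw [hPP i j (by omega) (by omega)]
          omega
        · have e0 := hd.tri r (P s) z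
          have e1 := nondesc hd r p (P s) z (by have := hd.symm p (P s); omega) (by omega)
          have e2 := hD p hp z hz
          have e3 := hPP i s his (by omega)
          have e4 := hd.tri (P i) (P s) z
          omega
    · obtain ⟨x, hx, hx1, hx2, hx3⟩ := struct2 hd k A r p hp hr D hg hDr hrp (by omega) hno
      obtain ⟨hqA, hq1, hq2⟩ := hP (s+1) (by omega)
      refine ⟨x, hx, ?_, ?_⟩
      · intro j hj h
        have := (hP j (by omega)).2.1
        rw [← h] at this
        omega
      · intro i hi his z hz _
        refine struct3 hd k s hs A r p x (P (s+1)) hr D hg hk hDr hrp (by omega) hno' hx hx1 hx2 hx3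
          hq1 (by omega) i hi (P i) ?_ z hz
        rw [hPP i (s+1) (by omega) (by omega)]
        omega
  have main : ∀ i, i ≤ s + 1 → ∃ B ⊆ A, (∀ z, z ∈ B ↔ z ∈ A ∧ ∀ j < i, z ≠ P j) ∧ Good d B ∧
      B.card + i = A.card ∧ (MM d k B).card + (i - 1) ≤ (MM d k A).card := by
    intro i
    induction i with
    | zero => intro _; exact ⟨A, subset_rfl, by simp, hg, by simp, by simp⟩
    | succ i ih =>
      intro hi
      obtain ⟨B, hBA, hB, hBg, hBc, hBM⟩ := ih (by omega)
      obtain ⟨hiA, hi1, hi2⟩ := hP i (by omega)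
      have hiB : P i ∈ B := by
        rw [hB]
        exact ⟨hiA, fun j hj h => by have := hPinj i j (by omega) (by omega) h; omega⟩
      have key : ∀ u ∈ B, u ≠ P i → d r u ≠ d r (P i) + d (P i) u := by
        intro u hu hui h
        obtain ⟨huA, huj⟩ := (hB u).1 hu
        have e1 := hd.tri r (P s) u
        have e2 := hd.tri (P s) (P i) u
        have e3 := hPP i s (by omega) (by omega)
        have e4 := hd.symm (P i) (P s)
        obtain ⟨j, hj, rfl⟩ := S u huA (by omega)
        have e5 : ¬ j < i := fun h => huj j h rfl
        have e6 : j ≠ i := fun h => hui (by rw [h])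
        have := (hP j (by omega)).2.2
        omega
      have hlf : Lf d B (P i) := by
        intro u hu v hv huy hvy h
        rcases desc hd r (P i) u v h with h | h
        · exact key u hu huy h
        · exact key v hv hvy h
      refine ⟨B.erase (P i), (Finset.erase_subset _ _).trans hBA, ?_, good_erase B _ hBg hlf, ?_, ?_⟩
      · intro z
        rw [Finset.mem_erase, hB]
        constructor
        · rintro ⟨h1, h2, h3⟩
          refine ⟨h2, fun j hj => ?_⟩
          rcases Nat.lt_succ_iff_lt_or_eq.1 hj with h | rfl
          · exact h3 j h
          · exact h1
        · rintro ⟨h1, h2⟩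
          exact ⟨h2 i (by omega), h1, fun j hj => h2 j (by omega)⟩
      · rw [Finset.card_erase_of_mem hiB]
        have := Finset.card_pos.2 ⟨_, hiB⟩
        omega
      · have m := mm_mono hd k B _ hiB
        by_cases hi0 : i = 0
        · omega
        · obtain ⟨w, hw, hw1, hw2⟩ := hW (by omega)
          have := mm_gain' hd k B (P i) hiB w ((hB w).2 ⟨hw, fun j hj => hw1 j (by omega)⟩)
            (hw1 i (by omega)) (fun z hz => by
              obtain ⟨h1, h2⟩ := (hB z).1 hz
              exact hw2 i (by omega) (by omega) z h1 h2)
          omega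
  obtain ⟨B, hBA, hB, hBg, hBc, hBM⟩ := main (s + 1) le_rfl
  refine ⟨B, hBA, hBg, ?_, by omega, by simpa using hBM⟩
  rw [hB]
  refine ⟨hr, fun j hj h => ?_⟩
  have := (hP j (by omega)).2.2
  rw [← h, hd.self] at this
  omega

theorem card_ge {V : Type} {d : V → V → ℕ} (A : Finset V) (hg : Good d A) (x y : V)
    (hx : x ∈ A) (hy : y ∈ A) : d x y + 1 ≤ A.card := by
  have h : ∀ i, ∃ z, i ≤ d x y → z ∈ A ∧ d x z = i := by
    intro i
    by_cases hi : i ≤ d x y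
    · obtain ⟨z, hz, h1, h2⟩ := hg x hx y hy i hi
      exact ⟨z, fun _ => ⟨hz, h1⟩⟩
    · exact ⟨x, fun h => absurd h hi⟩
  choose P hP using h
  rw [← Finset.card_range (d x y + 1)]
  refine Finset.card_le_card_of_injOn P ?_ ?_
  · intro i hi
    exact (hP i (by simp at hi; omega)).1
  · intro i hi j hj h
    simp at hi hj
    have h1 := (hP i (by omega)).2
    have h2 := (hP j (by omega)).2
    rw [h] at h1
    omega

theorem fk_le (k n : ℕ) : fk k n ≤ n := by
  unfold fk
  split_ifs with h
  · exact le_rfl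
  · have : 1 ≤ (n - k % 2) / (k / 2 + 1) := by
      rw [Nat.le_div_iff_mul_le (by omega)]
      omega
    omega

theorem fk_succ (k n : ℕ) : fk k (n + 1) ≤ fk k n + 1 := by
  have h1 := fk_le k (n + 1)
  by_cases h : n ≤ k + 1
  · have : fk k n = n := by simp [fk, h]
    omega
  · unfold fk
    rw [if_neg h, if_neg (by omega)]
    have : (n - k % 2) / (k / 2 + 1) ≤ (n + 1 - k % 2) / (k / 2 + 1) :=
      Nat.div_le_div_right (by omega)
    omega

theorem fk_add (k n : ℕ) (h : k + 2 ≤ n + (k / 2 + 1)) :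
    fk k (n + (k / 2 + 1)) ≤ fk k n + k / 2 := by
  have h2 : (n + (k / 2 + 1) - k % 2) / (k / 2 + 1) = (n - k % 2) / (k / 2 + 1) + 1 := by
    rw [show n + (k / 2 + 1) - k % 2 = n - k % 2 + (k / 2 + 1) by omega,
      Nat.add_div_right _ (Nat.succ_pos _)]
  have e1 : fk k (n + (k / 2 + 1)) =
      n + (k / 2 + 1) - (n + (k / 2 + 1) - k % 2) / (k / 2 + 1) + 1 := by
    unfold fk
    rw [if_neg (by omega)]
  have h3 : 1 ≤ (n - k % 2) / (k / 2 + 1) := by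
    rw [Nat.le_div_iff_mul_le (by omega)]
    omega
  have h4 : (n - k % 2) / (k / 2 + 1) ≤ n :=
    (Nat.div_le_self _ _).trans (by omega)
  rw [e1, h2]
  unfold fk
  split_ifs <;> omega

theorem lower {V : Type} {d : V → V → ℕ} (hd : TM d) (k : ℕ) (hk : 1 ≤ k) :
    ∀ n, ∀ A : Finset V, A.card = n → A.Nonempty → Good d A → fk k n ≤ (MM d k A).card := by
  classical
  intro n
  induction n using Nat.strong_induction_on with
  | _ n ih =>
    intro A hA hne hg
    by_cases hsm : ∀ x ∈ A, ∀ y ∈ A, d x y ≤ k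
    · exact (fk_le k n).trans (hA ▸ mm_small hd k A hsm)
    push Not at hsm
    obtain ⟨x0, hx0, y0, hy0, hxy⟩ := hsm
    obtain ⟨⟨r, p⟩, hrp, hmax⟩ := Finset.exists_max_image (A ×ˢ A) (fun x => d x.1 x.2)
      ⟨(x0, y0), by simp [hx0, hy0]⟩
    rw [Finset.mem_product] at hrp
    have hD : ∀ y ∈ A, ∀ z ∈ A, d y z ≤ d r p := fun y hy z hz =>
      hmax (y, z) (by simp [hy, hz])
    have h0 := hD x0 hx0 y0 hy0
    have hc := card_ge A hg r p hrp.1 hrp.2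
    by_cases hno : ∀ y ∈ A, Lf d A y → ¬ ((MM d k (A.erase y)).card + 1 ≤ (MM d k A).card)
    · obtain ⟨B, hBA, hBg, hrB, hBc, hBM⟩ := chain hd k (k / 2) (by omega) A r p hrp.2 hrp.1 _ hg hk
        hD rfl (by omega) hno
      have h1 := ih B.card (by omega) B rfl ⟨r, hrB⟩ hBg
      have h2 := fk_add k B.card (by omega)
      rw [show B.card + (k / 2 + 1) = n by omega] at h2
      omega
    · push Not at hno
      obtain ⟨y, hy, hlf, hgain⟩ := hno
      have hce := Finset.card_erase_of_mem hy
      have h1 := ih (A.erase y).card (by omega) _ rfl (Finset.card_pos.1 (by omega))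
        (good_erase A y hg hlf)
      have h2 := fk_succ k (A.erase y).card
      rw [show (A.erase y).card + 1 = n by omega] at h2
      omega

section treefacts
variable {V : Type} {T : SimpleGraph V}

theorem tree_unique_pred (hT : T.IsTree) (x v u u' : V) (h : T.Adj u v) (h' : T.Adj u' v)
    (hu : T.dist x v = T.dist x u + 1) (hu' : T.dist x v = T.dist x u' + 1) : u = u' := by
  obtain ⟨p, hp, hpl⟩ := hT.connected.exists_path_of_dist x u
  obtain ⟨q, hq, hql⟩ := hT.connected.exists_path_of_dist x u'
  have hp1 : (p.concat h).IsPath :=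
    SimpleGraph.Walk.isPath_of_length_eq_dist _ (by rw [SimpleGraph.Walk.length_concat]; omega)
  have hq1 : (q.concat h').IsPath :=
    SimpleGraph.Walk.isPath_of_length_eq_dist _ (by rw [SimpleGraph.Walk.length_concat]; omega)
  have := (hT.existsUnique_path x v).unique hp1 hq1
  have h2 := congrArg SimpleGraph.Walk.penultimate this
  simpa using h2

theorem tree_next (hT : T.IsTree) (z w : V) (m : ℕ) (h : T.dist z w = m + 1) :
    ∃ z', T.Adj z z' ∧ T.dist z' w = m := by
  obtain ⟨p, hp⟩ := hT.connected.exists_walk_length_eq_dist z w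
  cases p with
  | nil => simp at h
  | cons ha q =>
    rename_i z'
    refine ⟨z', ha, ?_⟩
    rw [SimpleGraph.Walk.length_cons] at hp
    have h1 := SimpleGraph.dist_le q
    have h2 := hT.connected.dist_triangle (u := z) (v := z') (w := w)
    have h3 := SimpleGraph.dist_eq_one_iff_adj.2 ha
    omega

theorem tree_go (hT : T.IsTree) (x w : V) : ∀ (m : ℕ) (z z' : V), T.Adj z z' →
    T.dist x z' = T.dist x z + 1 → T.dist z w = m + 1 → T.dist z' w = m →
    T.dist x w = T.dist x z + m + 1 := by
  intro m
  induction m with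
  | zero =>
    intro z z' ha h1 h2 h3
    have := hT.connected.dist_eq_zero_iff.1 h3
    subst this
    omega
  | succ m ih =>
    intro z z' ha h1 h2 h3
    obtain ⟨z'', ha', h4⟩ := tree_next hT z' w m h3
    have hne : z'' ≠ z := by rintro rfl; omega
    have h5 : T.dist x z'' = T.dist x z' + 1 := by
      rcases hT.dist_eq_dist_add_one_of_adj x ha' with h | h
      · exact absurd (tree_unique_pred hT x z' z'' z ha'.symm ha h h1) hne
      · exact h
    have := ih z' z'' ha' h5 h3 h4
    omega

theorem tree_four (hT : T.IsTree) (x y : V) : ∀ (m : ℕ) (z w : V), T.dist z w = m →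
    T.dist x y + T.dist z w ≤ T.dist x z + T.dist y w ∨
    T.dist x y + T.dist z w ≤ T.dist x w + T.dist y z := by
  intro m
  induction m with
  | zero =>
    intro z w h
    have := hT.connected.dist_eq_zero_iff.1 h
    subst this
    have h1 := hT.connected.dist_triangle (u := x) (v := z) (w := y)
    have h2 := T.dist_comm (u := y) (v := z)
    omega
  | succ m ih =>
    intro z w h
    obtain ⟨z', ha, h4⟩ := tree_next hT z w m h
    have h0 := ih z' w h4
    have h1 := hT.connected.dist_triangle (u := x) (v := z) (w := y)
    have h2 := T.dist_comm (u := y) (v := z)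
    rcases hT.dist_eq_dist_add_one_of_adj x ha with hx | hx
    · rcases hT.dist_eq_dist_add_one_of_adj y ha with hy | hy
      · omega
      · have := tree_go hT y w m z z' ha hy h h4
        omega
    · have := tree_go hT x w m z z' ha hx h h4
      omega

theorem tree_par (hT : T.IsTree) (x y : V) : ∀ (m : ℕ) (z : V), T.dist y z = m →
    (T.dist x y + T.dist y z + T.dist x z) % 2 = 0 := by
  intro m
  induction m with
  | zero =>
    intro z h
    have := hT.connected.dist_eq_zero_iff.1 h
    subst this
    omega
  | succ m ih =>
    intro z h
    obtain ⟨z', ha, h4⟩ := tree_next hT z y m (by rw [T.dist_comm]; exact h)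
    rw [T.dist_comm] at h4
    have := ih z' h4
    rcases hT.dist_eq_dist_add_one_of_adj x ha with hx | hx <;> omega

theorem tree_TM (hT : T.IsTree) : TM T.dist where
  self x := by simp
  eq x y h := hT.connected.dist_eq_zero_iff.1 h
  symm x y := T.dist_comm
  tri x y z := hT.connected.dist_triangle
  four x y z w := tree_four hT x y _ z w rfl
  par x y z := tree_par hT x y _ z rfl

theorem tree_good [Fintype V] (hT : T.IsTree) : Good T.dist Finset.univ := by
  intro x _ y _ i
  induction i with
  | zero => intro _; exact ⟨x, by simp, by simp, by simp⟩
  | succ i ih =>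
    intro hi
    obtain ⟨z, -, h1, h2⟩ := ih (by omega)
    obtain ⟨z', ha, h4⟩ := tree_next hT z y (T.dist x y - i - 1) (by omega)
    have h5 := hT.connected.dist_triangle (u := x) (v := z') (w := y)
    have h6 := hT.connected.dist_triangle (u := x) (v := z) (w := z')
    have h3 := SimpleGraph.dist_eq_one_iff_adj.2 ha
    exact ⟨z', by simp, by omega, by omega⟩

theorem max_iff [Fintype V] (hT : T.IsTree) (k : ℕ) (J : Finset V) :
    Mx T.dist k Finset.univ J ↔ MaxDkIndep T k (J : Set V) := by
  constructor
  · rintro ⟨-, h1, h2⟩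
    refine ⟨?_, ?_⟩
    · intro u hu v hv huv
      by_contra h
      exact huv (h1 u hu v hv (by omega))
    · intro J' hJ' hs
      refine Set.Subset.antisymm ?_ hs
      intro v hv
      refine h2 v (by simp) ?_
      intro u hu huv
      by_contra hne
      have := hJ' (hs hu) hv hne
      omega
  · rintro ⟨h1, h2⟩
    refine ⟨by simp, ?_, ?_⟩
    · intro u hu v hv huv
      by_contra hne
      have := h1 hu hv hne
      omega
    · intro v _ h
      have := h2 (insert v (J : Set V)) ?_ (Set.subset_insert _ _)
      · have h3 : v ∈ insert v (J : Set V) := Set.mem_insert _ _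
        rw [this] at h3
        exact h3
      · intro a ha b hb hab
        by_contra hcon
        rcases ha with rfl | ha <;> rcases hb with rfl | hb
        · exact hab rfl
        · exact hab (h b hb (by rw [T.dist_comm]; omega)).symm
        · exact hab (h a ha (by omega))
        · have := h1 ha hb hab
          omega

theorem mdi_eq [Fintype V] (hT : T.IsTree) (k : ℕ) :
    mdi T k = (MM T.dist k Finset.univ).card := by
  classical
  unfold mdi
  have : {J : Set V | MaxDkIndep T k J} =
      ((MM T.dist k Finset.univ).map ⟨fun J : Finset V => (J : Set V), Finset.coe_injective⟩ :
        Finset (Set V)) := by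
    ext J
    simp only [Set.mem_setOf_eq, Finset.coe_map, Function.Embedding.coeFn_mk, Set.mem_image,
      Finset.mem_coe, mem_MM]
    constructor
    · intro h
      refine ⟨J.toFinite.toFinset, ?_, by simp⟩
      rw [max_iff hT]
      simpa using h
    · rintro ⟨K, hK, rfl⟩
      exact (max_iff hT k K).1 hK
  rw [this, Set.ncard_coe_finset, Finset.card_map]

end treefacts

theorem tree_lower (k n : ℕ) (hk : 1 ≤ k) (hn : 1 ≤ n) (V : Type) [Fintype V]
    (hc : Fintype.card V = n) (T : SimpleGraph V) (hT : T.IsTree) : fk k n ≤ mdi T k := by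
  rw [mdi_eq hT]
  refine lower (tree_TM hT) k hk n Finset.univ (by rw [Finset.card_univ, hc]) ?_ (tree_good hT)
  rw [← Finset.card_pos, Finset.card_univ]
  omega

def spar (s n : ℕ) (hn : 1 ≤ n) (i : Fin n) : Fin n :=
  if (i.val - 1) % (s + 1) = 0 then ⟨0, hn⟩ else ⟨i.val - 1, by omega⟩

def sp (s n : ℕ) (hn : 1 ≤ n) : SimpleGraph (Fin n) :=
  SimpleGraph.fromRel fun a b => b.val ≠ 0 ∧ a = spar s n hn b

def dep (s i : ℕ) : ℕ := if i = 0 then 0 else (i - 1) % (s + 1) + 1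

theorem spar_lt (s n : ℕ) (hn : 1 ≤ n) (i : Fin n) (hi : i.val ≠ 0) :
    (spar s n hn i).val < i.val := by
  unfold spar
  split_ifs
  · simp; omega
  · simp; omega

theorem sp_adj (s n : ℕ) (hn : 1 ≤ n) (i : Fin n) (hi : i.val ≠ 0) :
    (sp s n hn).Adj i (spar s n hn i) := by
  rw [sp, SimpleGraph.fromRel_adj]
  have := spar_lt s n hn i hi
  refine ⟨fun h => ?_, Or.inr ⟨hi, rfl⟩⟩
  rw [← h] at this
  omega

theorem mod_pred (m i : ℕ) (h : i % m ≠ 0) : (i - 1) % m + 1 = i % m := by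
  rcases Nat.eq_zero_or_pos m with rfl | hm
  · simp at *; omega
  · have h1 := Nat.div_add_mod i m
    have h2 := Nat.mod_lt i hm
    have : i - 1 = (i % m - 1) + m * (i / m) := by omega
    rw [this, Nat.add_mul_mod_self_left, Nat.mod_eq_of_lt (by omega)]
    omega

theorem div_pred (m i : ℕ) (h : i % m ≠ 0) : (i - 1) / m = i / m := by
  rcases Nat.eq_zero_or_pos m with rfl | hm
  · simp
  · have h1 := Nat.div_add_mod i m
    have h2 := Nat.mod_lt i hm
    have : i - 1 = (i % m - 1) + m * (i / m) := by omega
    rw [this, Nat.add_mul_div_left _ _ hm, Nat.div_eq_of_lt (by omega)]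
    omega

theorem dep_spar (s n : ℕ) (hn : 1 ≤ n) (i : Fin n) (hi : i.val ≠ 0) :
    dep s (spar s n hn i).val + 1 = dep s i.val := by
  unfold spar dep
  split_ifs with h1 h2 h2
  · simp at h2; simp [h1]
  · simp at h2
  · simp only [] at h2
    rw [h2] at h1; simp at h1
  · simp only []
    rw [mod_pred _ _ h1]

theorem sp_reach (s n : ℕ) (hn : 1 ≤ n) : ∀ (m : ℕ) (i : Fin n), i.val = m →
    ∃ p : (sp s n hn).Walk i ⟨0, hn⟩, p.length = dep s i.val := by
  intro m
  induction m using Nat.strong_induction_on with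
  | _ m ih =>
    intro i hi
    by_cases h0 : i.val = 0
    · have : i = ⟨0, hn⟩ := Fin.ext h0
      subst this
      exact ⟨SimpleGraph.Walk.nil, by simp [dep]⟩
    · obtain ⟨p, hp⟩ := ih (spar s n hn i).val (hi ▸ spar_lt s n hn i h0) _ rfl
      refine ⟨SimpleGraph.Walk.cons (sp_adj s n hn i h0) p, ?_⟩
      rw [SimpleGraph.Walk.length_cons, hp, dep_spar s n hn i h0]

theorem sp_conn (s n : ℕ) (hn : 1 ≤ n) : (sp s n hn).Connected := by
  haveI : Nonempty (Fin n) := ⟨⟨0, hn⟩⟩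
  refine ⟨fun a b => ?_⟩
  obtain ⟨p, -⟩ := sp_reach s n hn _ a rfl
  obtain ⟨q, -⟩ := sp_reach s n hn _ b rfl
  exact p.reachable.trans q.reachable.symm

theorem sp_dist_zero (s n : ℕ) (hn : 1 ≤ n) (i : Fin n) :
    (sp s n hn).dist i ⟨0, hn⟩ ≤ dep s i.val := by
  obtain ⟨p, hp⟩ := sp_reach s n hn _ i rfl
  rw [← hp]
  exact SimpleGraph.dist_le p

theorem sp_tree (s n : ℕ) (hn : 1 ≤ n) : (sp s n hn).IsTree := by
  classical
  rw [SimpleGraph.isTree_iff_connected_and_card]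
  refine ⟨sp_conn s n hn, ?_⟩
  have h1 := (sp_conn s n hn).card_vert_le_card_edgeSet_add_one
  have h2 : (sp s n hn).edgeSet ⊆
      (((Finset.univ.erase (⟨0, hn⟩ : Fin n)).image
        (fun i => s(i, spar s n hn i)) : Finset (Sym2 (Fin n))) : Set (Sym2 (Fin n))) := by
    intro e
    induction e using Sym2.ind with
    | _ a b =>
      intro h
      rw [SimpleGraph.mem_edgeSet, sp, SimpleGraph.fromRel_adj] at h
      simp only [Finset.coe_image, Set.mem_image, Finset.mem_coe, Finset.mem_erase,
        Finset.mem_univ, and_true]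
      rcases h with ⟨-, ⟨h0, h⟩ | ⟨h0, h⟩⟩
      · exact ⟨b, fun hb => h0 (by rw [hb]), by rw [h]; exact Sym2.eq_swap⟩
      · exact ⟨a, fun hb => h0 (by rw [hb]), by rw [h]⟩
  have h3 := Set.ncard_le_ncard h2 (Finset.finite_toSet _)
  rw [Set.ncard_coe_finset] at h3
  have h4 := h3.trans Finset.card_image_le
  rw [Finset.card_erase_of_mem (by simp), Finset.card_univ, Fintype.card_fin] at h4
  have h5 : Nat.card (sp s n hn).edgeSet = (sp s n hn).edgeSet.ncard := rfl
  have h6 : Nat.card (Fin n) = n := by simp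
  omega

/-- signed height relative to leg `c`. -/
def hgt (s c i : ℕ) : ℤ := if (i - 1) / (s + 1) = c then -(dep s i : ℤ) else dep s i

theorem hgt_adj (s n : ℕ) (hn : 1 ≤ n) (c : ℕ) (i : Fin n) (hi : i.val ≠ 0) :
    |hgt s c i.val - hgt s c (spar s n hn i).val| ≤ 1 := by
  have h := dep_spar s n hn i hi
  by_cases h0 : (i.val - 1) % (s + 1) = 0
  · have h1 : (spar s n hn i).val = 0 := by simp [spar, h0]
    rw [h1] at h ⊢
    have h2 : dep s 0 = 0 := by simp [dep]
    have h3 : hgt s c 0 = 0 := by simp [hgt, h2]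
    rw [h3, abs_le]
    unfold hgt
    split_ifs <;> omega
  · have h1 : (spar s n hn i).val = i.val - 1 := by simp [spar, h0]
    have h2 := div_pred _ _ h0
    rw [abs_le]
    unfold hgt
    rw [h1, h2]
    rw [h1] at h
    split_ifs <;> omega

theorem hgt_walk (s n : ℕ) (hn : 1 ≤ n) (c : ℕ) (a b : Fin n) (p : (sp s n hn).Walk a b) :
    |hgt s c a.val - hgt s c b.val| ≤ p.length := by
  induction p with
  | nil => simp
  | cons h p ih =>
    rename_i u v w
    rw [SimpleGraph.Walk.length_cons]
    have : |hgt s c u.val - hgt s c v.val| ≤ 1 := by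
      rw [sp, SimpleGraph.fromRel_adj] at h
      rcases h with ⟨-, ⟨h0, h⟩ | ⟨h0, h⟩⟩
      · rw [h, abs_sub_comm]; exact hgt_adj s n hn c v h0
      · rw [h]; exact hgt_adj s n hn c u h0
    rw [abs_le] at *
    push_cast
    omega

theorem sp_dist_ge (s n : ℕ) (hn : 1 ≤ n) (a b : Fin n)
    (hab : (a.val - 1) / (s + 1) ≠ (b.val - 1) / (s + 1)) :
    dep s a.val + dep s b.val ≤ (sp s n hn).dist a b := by
  obtain ⟨p, hp⟩ := (sp_conn s n hn).exists_walk_length_eq_dist a b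
  have := hgt_walk s n hn ((a.val - 1) / (s + 1)) a b p
  rw [hp, abs_le] at this
  unfold hgt at this
  rw [if_pos rfl, if_neg (Ne.symm hab)] at this
  omega

theorem dep_le (s i : ℕ) : dep s i ≤ s + 1 := by
  unfold dep
  have := Nat.mod_lt (i - 1) (show 0 < s + 1 by omega)
  split_ifs <;> omega

theorem dep_top (s i : ℕ) : dep s i = s + 1 ↔ (i ≠ 0 ∧ (s + 1) ∣ i) := by
  unfold dep
  split_ifs with h
  · simp [h]
  · constructor
    · intro h1
      refine ⟨h, ?_⟩
      have h2 := Nat.div_add_mod (i - 1) (s + 1)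
      refine ⟨(i - 1) / (s + 1) + 1, ?_⟩
      rw [Nat.mul_add]
      omega
    · rintro ⟨-, m, rfl⟩
      have : m ≠ 0 := by rintro rfl; simp at h
      obtain ⟨m, rfl⟩ := Nat.exists_eq_succ_of_ne_zero this
      rw [show (s + 1) * (m + 1) - 1 = s + (s + 1) * m by rw [Nat.mul_add]; omega,
        Nat.add_mul_mod_self_left, Nat.mod_eq_of_lt (by omega)]

theorem sp_upper (k n : ℕ) (hk : 1 ≤ k) (hn : 1 ≤ n) : mdi (sp (k / 2) n hn) k ≤ fk k n := by
  classical
  have hT := sp_tree (k / 2) n hn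
  have hd := tree_TM hT
  rw [mdi_eq hT]
  by_cases hnk : n ≤ k + 1
  · have hf : fk k n = n := by simp [fk, hnk]
    rw [hf]
    have hsub : MM (sp (k / 2) n hn).dist k Finset.univ ⊆
        Finset.univ.image (fun v : Fin n => ({v} : Finset (Fin n))) := by
      intro J hJ
      rw [mem_MM] at hJ
      have hall : ∀ u v, (sp (k / 2) n hn).dist u v ≤ k := by
        intro u v
        have := card_ge Finset.univ (tree_good hT) u v (by simp) (by simp)
        rw [Finset.card_univ, Fintype.card_fin] at this
        omega
      have hne : J.Nonempty := by
        by_contra h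
        rw [Finset.not_nonempty_iff_eq_empty] at h
        subst h
        have := hJ.2.2 ⟨0, hn⟩ (by simp) (by simp)
        simp at this
      obtain ⟨v, hv⟩ := hne
      refine Finset.mem_image.2 ⟨v, by simp, ?_⟩
      ext u
      simp only [Finset.mem_singleton]
      constructor
      · rintro rfl; exact hv
      · intro hu; exact hJ.2.1 u hu v hv (hall u v)
    have := (Finset.card_le_card hsub).trans Finset.card_image_le
    simpa using this
  · set s := k / 2 with hs
    set d := (sp s n hn).dist with hdd
    set L : Finset (Fin n) := Finset.univ.filter (fun i => dep s i.val = s + 1) with hL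
    have hLmem : ∀ i, i ∈ L ↔ dep s i.val = s + 1 := by intro i; simp [hL]
    have hleg : ∀ a ∈ L, ∀ b ∈ L, (a.val - 1) / (s + 1) = (b.val - 1) / (s + 1) → a = b := by
      intro a ha b hb h
      rw [hLmem] at ha hb
      have ha' := (dep_top s a.val).1 ha
      have hb' := (dep_top s b.val).1 hb
      unfold dep at ha hb
      rw [if_neg ha'.1] at ha
      rw [if_neg hb'.1] at hb
      have h1 := Nat.div_add_mod (a.val - 1) (s + 1)
      have h2 := Nat.div_add_mod (b.val - 1) (s + 1)
      rw [h] at h1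
      apply Fin.ext
      omega
    have hLd : ∀ a ∈ L, ∀ b ∈ L, d a b ≤ k → a = b := by
      intro a ha b hb h
      by_contra hab
      have h1 := sp_dist_ge s n hn a b (fun h => hab (hleg a ha b hb h))
      rw [hLmem] at ha hb
      rw [← hdd] at h1
      omega
    have hLow : ∀ a, a ∉ L → ∀ b, b ∉ L → d a b ≤ k := by
      intro a ha b hb
      rw [hLmem] at ha hb
      have h1 := sp_dist_zero s n hn a
      have h2 := sp_dist_zero s n hn b
      have h3 := dep_le s a.val
      have h4 := dep_le s b.val
      have h5 := hd.tri a ⟨0, hn⟩ b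
      have h6 := hd.symm b ⟨0, hn⟩
      rw [← hdd] at h1 h2
      omega
    let F : Fin n → Finset (Fin n) := fun v => insert v (L.filter (fun l => k < d v l))
    have hsub : ∀ J ∈ MM d k Finset.univ, J ∈ (Finset.univ \ L).image F ∨ J = L := by
      intro J hJ
      rw [mem_MM] at hJ
      obtain ⟨-, h1, h2⟩ := hJ
      by_cases h : J ⊆ L
      · right
        refine Finset.Subset.antisymm h fun l hl => ?_
        exact h2 l (by simp) fun u hu huv => hLd u (h hu) l hl huv
      · left
        rw [Finset.not_subset] at h
        obtain ⟨v, hv, hvL⟩ := h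
        refine Finset.mem_image.2 ⟨v, by simp [hvL], ?_⟩
        have hJF : J ⊆ F v := by
          intro u hu
          by_cases huv : u = v
          · simp [F, huv]
          · have h3 : k < d v u := by
              by_contra h
              exact huv (h1 v hv u hu (by omega)).symm
            have h4 : u ∈ L := by
              by_contra h
              have := hLow v hvL u h
              omega
            simp [F, h3, h4]
        refine Finset.Subset.antisymm ?_ hJF
        intro l hl
        rcases Finset.mem_insert.1 hl with rfl | hl
        · exact hv
        · rw [Finset.mem_filter] at hl
          refine h2 l (by simp) fun u hu hul => ?_
          rcases Finset.mem_insert.1 (hJF hu) with rfl | hu'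
          · omega
          · exact hLd u (Finset.mem_filter.1 hu').1 l hl.1 hul
    have hLcard : L.card = (n - 1) / (s + 1) := by
      rw [← Nat.card_multiples (n - 1) (s + 1)]
      refine Finset.card_bij (fun i _ => i.val - 1) ?_ ?_ ?_
      · intro a ha
        rw [hLmem, dep_top] at ha
        simp only [Finset.mem_filter, Finset.mem_range]
        refine ⟨by omega, ?_⟩
        rw [Nat.sub_add_cancel (by omega)]
        exact ha.2
      · intro a ha b hb h
        rw [hLmem, dep_top] at ha hb
        apply Fin.ext
        omega
      · intro b hb
        simp only [Finset.mem_filter, Finset.mem_range] at hb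
        refine ⟨⟨b + 1, by omega⟩, ?_, by simp⟩
        rw [hLmem, dep_top]
        exact ⟨by simp, hb.2⟩
    have hc1 : ((Finset.univ \ L).image F).card ≤ n - (n - 1) / (s + 1) := by
      refine Finset.card_image_le.trans ?_
      rw [Finset.card_sdiff_of_subset (Finset.subset_univ _), hLcard, Finset.card_univ, Fintype.card_fin]
    have hf : fk k n = n - (n - k % 2) / (s + 1) + 1 := by
      unfold fk
      rw [if_neg hnk]
    rw [hf]
    by_cases hdiv : k % 2 = 0 ∧ (s + 1) ∣ n
    · have hnL : L ∉ MM d k Finset.univ := by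
        intro hJ
        rw [mem_MM] at hJ
        obtain ⟨m, hm⟩ := hdiv.2
        have hm0 : m ≠ 0 := by rintro rfl; simp at hm; omega
        obtain ⟨m, rfl⟩ := Nat.exists_eq_succ_of_ne_zero hm0
        have hs1 : 1 ≤ s := by omega
        have hmm : (s + 1) * (m + 1) = (s + 1) * m + s + 1 := by ring
        have hm' : n = (s + 1) * m + s + 1 := hm.trans hmm
        have e1 : n - 1 - 1 = (s - 1) + (s + 1) * m := by omega
        have e2 : (n - 1 - 1) / (s + 1) = m := by
          rw [e1, Nat.add_mul_div_left _ _ (Nat.succ_pos s),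
            Nat.div_eq_of_lt (show s - 1 < s + 1 by omega), Nat.zero_add]
        have e3 : dep s (n - 1) = s := by
          unfold dep
          rw [if_neg (by omega), e1, Nat.add_mul_mod_self_left, Nat.mod_eq_of_lt (by omega)]
          omega
        have hin : (⟨n - 1, by omega⟩ : Fin n) ∈ L := by
          refine hJ.2.2 _ (by simp) fun u hu huv => ?_
          exfalso
          have hu1 := (hLmem u).1 hu
          have hu2 := (dep_top s u.val).1 hu1
          have hne : (u.val - 1) / (s + 1) ≠ (n - 1 - 1) / (s + 1) := by
            intro h
            rw [e2] at h
            unfold dep at hu1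
            rw [if_neg hu2.1] at hu1
            have h1 := Nat.div_add_mod (u.val - 1) (s + 1)
            rw [h] at h1
            have := u.isLt
            omega
          have := sp_dist_ge s n hn u ⟨n - 1, by omega⟩ hne
          simp only [] at this
          rw [← hdd, e3] at this
          omega
        rw [hLmem] at hin
        simp only [] at hin
        omega
      have hsub2 : MM d k Finset.univ ⊆ (Finset.univ \ L).image F := by
        intro J hJ
        rcases hsub J hJ with h | h
        · exact h
        · rw [h] at hJ; exact absurd hJ hnL
      have h1 := Finset.card_le_card hsub2
      have h2 : n / (s + 1) = (n - 1) / (s + 1) + 1 := by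
        obtain ⟨m, hm⟩ := hdiv.2
        have hm0 : m ≠ 0 := by rintro rfl; simp at hm; omega
        obtain ⟨m, rfl⟩ := Nat.exists_eq_succ_of_ne_zero hm0
        have hmm : (s + 1) * (m + 1) = (s + 1) * m + s + 1 := by ring
        have hm' : n = (s + 1) * m + s + 1 := hm.trans hmm
        have e1 : n - 1 = s + (s + 1) * m := by omega
        have e2 : (n - 1) / (s + 1) = m := by
          rw [e1, Nat.add_mul_div_left _ _ (Nat.succ_pos s),
            Nat.div_eq_of_lt (Nat.lt_succ_self s), Nat.zero_add]
        rw [e2]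
        exact Nat.div_eq_of_eq_mul_right (Nat.succ_pos s) hm
      have h3 : n / (s + 1) ≤ n := Nat.div_le_self _ _
      rw [hdiv.1, Nat.sub_zero]
      omega
    · have hsub2 : MM d k Finset.univ ⊆ insert L ((Finset.univ \ L).image F) := by
        intro J hJ
        rw [Finset.mem_insert]
        exact (hsub J hJ).symm
      have h1 := (Finset.card_le_card hsub2).trans (Finset.card_insert_le _ _)
      have h2 : (n - k % 2) / (s + 1) = (n - 1) / (s + 1) := by
        rcases Nat.mod_two_eq_zero_or_one k with h | h
        · rw [h, Nat.sub_zero]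
          exact (div_pred _ _ fun h' => hdiv ⟨h, Nat.dvd_of_mod_eq_zero h'⟩).symm
        · rw [h]
      rw [h2]
      omega

/-- For all `k ≥ 1` and `n ≥ 1`, every tree on `n` vertices has at least
`f_k(n)` maximal distance-`k` independent sets, and some tree on `n` vertices has
exactly `f_k(n)` of them. -/
theorem stmt_0 (k n : ℕ) (hk : 1 ≤ k) (hn : 1 ≤ n) :
    (∀ (V : Type) [Fintype V], Fintype.card V = n → ∀ T : SimpleGraph V, T.IsTree →
      fk k n ≤ mdi T k) ∧
    (∃ T : SimpleGraph (Fin n), T.IsTree ∧ mdi T k = fk k n) := by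
  refine ⟨fun V _ hc T hT => tree_lower k n hk hn V hc T hT,
    sp (k / 2) n hn, sp_tree _ _ _, ?_⟩
  exact le_antisymm (sp_upper k n hk hn)
    (tree_lower k n hk hn (Fin n) (Fintype.card_fin n) _ (sp_tree _ _ _))
end

section
/- For every odd integer k ≥ 3: (i) a tree T of diameter k + 1 has no leaf that is a k-twin if and only if T is isomorphic to S_{p,⌊k/2⌋+1} for some p ≥ 2; (ii) a tree T of diameter k + 2 has no leaf that is a k-twin if and only if T is isomorphic to B_{p1,p2,⌊k/2⌋+1} for some p1, p2 ≥ 1. -/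
structure RT {V : Type*} (T : SimpleGraph V) (δ : V → ℕ) (par : V → V) : Prop where
  par0 : ∀ v, δ v = 0 → par v = v
  adjp : ∀ v, 0 < δ v → T.Adj v (par v)
  dp : ∀ v, 0 < δ v → δ (par v) + 1 = δ v
  edge : ∀ u v, T.Adj u v →
    (δ u = 0 ∧ δ v = 0) ∨ (0 < δ v ∧ u = par v) ∨ (0 < δ u ∧ v = par u)
  compl : ∀ u v, δ u = 0 → δ v = 0 → u ≠ v → T.Adj u v

def rtop {V : Type*} (δ : V → ℕ) (par : V → V) (v : V) : V := par^[δ v - 1] v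
def rbase {V : Type*} (δ : V → ℕ) (par : V → V) (v : V) : V := par^[δ v] v

theorem lip_dist {V : Type*} {T : SimpleGraph V} (hc : T.Connected) (f : V → ℤ)
    (hf : ∀ u v, T.Adj u v → f u - f v ≤ 1) (u v : V) : f u - f v ≤ T.dist u v := by
  obtain ⟨p, hp⟩ := hc.exists_walk_length_eq_dist u v
  rw [← hp]
  clear hp
  induction p with
  | nil => simp
  | cons h p ih =>
    have := hf _ _ h
    simp only [SimpleGraph.Walk.length_cons]
    push_cast
    linarith

namespace RT
variable {V : Type*} {T : SimpleGraph V} {δ : V → ℕ} {par : V → V}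

theorem d_iter (h : RT T δ par) (n : ℕ) : ∀ v, n ≤ δ v → δ (par^[n] v) = δ v - n := by
  induction n with
  | zero => intro v _; simp
  | succ n ih =>
    intro v hv
    have := h.dp v (by omega)
    rw [Function.iterate_succ_apply, ih _ (by omega)]
    omega

theorem d_top (h : RT T δ par) (v : V) (hv : 0 < δ v) : δ (rtop δ par v) = 1 := by
  rw [rtop, h.d_iter _ _ (by omega)]; omega

theorem d_base (h : RT T δ par) (v : V) : δ (rbase δ par v) = 0 := by
  rw [rbase, h.d_iter _ _ le_rfl]; omega

theorem top0 (v : V) (hv : δ v = 0) : rtop δ par v = v := by simp [rtop, hv]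
theorem top1 (v : V) (hv : δ v = 1) : rtop δ par v = v := by simp [rtop, hv]
theorem base0 (v : V) (hv : δ v = 0) : rbase δ par v = v := by simp [rbase, hv]

theorem top_par (h : RT T δ par) (v : V) (hv : 2 ≤ δ v) :
    rtop δ par (par v) = rtop δ par v := by
  have := h.dp v (by omega)
  obtain ⟨n, hn⟩ : ∃ n, δ v = n + 2 := ⟨δ v - 2, by omega⟩
  have h2 : δ (par v) = n + 1 := by omega
  simp only [rtop, hn, h2]
  rfl

theorem base_par (h : RT T δ par) (v : V) :
    rbase δ par (par v) = rbase δ par v := by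
  rcases Nat.eq_zero_or_pos (δ v) with h0 | h0
  · rw [h.par0 v h0]
  have := h.dp v h0
  obtain ⟨n, hn⟩ : ∃ n, δ v = n + 1 := ⟨δ v - 1, by omega⟩
  have h2 : δ (par v) = n := by omega
  simp only [rbase, hn, h2]
  rfl

theorem par_top (v : V) (hv : 0 < δ v) :
    par (rtop δ par v) = rbase δ par v := by
  obtain ⟨n, hn⟩ : ∃ n, δ v = n + 1 := ⟨δ v - 1, by omega⟩
  simp only [rtop, rbase, hn, Nat.add_sub_cancel]
  rw [Function.iterate_succ_apply']

theorem base_of_top (h : RT T δ par) {u v : V} (e : rtop δ par u = rtop δ par v) :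
    rbase δ par u = rbase δ par v := by
  rcases Nat.eq_zero_or_pos (δ u) with h0 | h0 <;> rcases Nat.eq_zero_or_pos (δ v) with h1 | h1
  · rw [top0 u h0, top0 v h1] at e; rw [e]
  · have := h.d_top v h1
    rw [← e, top0 u h0] at this; omega
  · have := h.d_top u h0
    rw [e, top0 v h1] at this; omega
  · rw [← par_top u h0, ← par_top v h1, e]

theorem dist_iter (h : RT T δ par) (hc : T.Connected) (n : ℕ) :
    ∀ v, n ≤ δ v → T.dist v (par^[n] v) ≤ n := by
  induction n with
  | zero => intro v _; simp
  | succ n ih =>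
    intro v hv
    have h1 := h.dp v (by omega)
    have h2 := ih (par v) (by omega)
    have h3 := SimpleGraph.dist_eq_one_iff_adj.2 (h.adjp v (by omega))
    have h4 := hc.dist_triangle (u := v) (v := par v) (w := par^[n] (par v))
    rw [Function.iterate_succ_apply]
    omega

open Classical in
theorem dist_le (h : RT T δ par) (hc : T.Connected) (u v : V) :
    T.dist u v ≤ δ u + δ v + (if rbase δ par u = rbase δ par v then 0 else 1) := by
  have h1 := h.dist_iter hc (δ u) u le_rfl
  have h2 := h.dist_iter hc (δ v) v le_rfl
  have h4 := hc.dist_triangle (u := u) (v := rbase δ par u) (w := v)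
  have h5 := hc.dist_triangle (u := rbase δ par u) (v := rbase δ par v) (w := v)
  rw [SimpleGraph.dist_comm (v := v) (u := rbase δ par v)] at h5
  change T.dist u (rbase δ par u) ≤ _ at h1
  change T.dist v (rbase δ par v) ≤ _ at h2
  split_ifs with e
  · rw [e, SimpleGraph.dist_self] at h5
    rw [e] at h4 h1
    omega
  · have := SimpleGraph.dist_eq_one_iff_adj.2 (h.compl _ _ (h.d_base u) (h.d_base v) e)
    omega

theorem dist_le_top (h : RT T δ par) (hc : T.Connected) (u v : V)
    (e : rtop δ par u = rtop δ par v) :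
    T.dist u v ≤ (δ u - 1) + (δ v - 1) := by
  have h1 := h.dist_iter hc (δ u - 1) u (by omega)
  have h2 := h.dist_iter hc (δ v - 1) v (by omega)
  have h4 := hc.dist_triangle (u := u) (v := rtop δ par u) (w := v)
  change T.dist u (rtop δ par u) ≤ _ at h1
  change T.dist v (rtop δ par v) ≤ _ at h2
  rw [SimpleGraph.dist_comm, ← e] at h2
  omega

open Classical in
theorem le_dist (h : RT T δ par) (hc : T.Connected) (u v : V)
    (e : rtop δ par u ≠ rtop δ par v) :
    δ u + δ v + (if rbase δ par u = rbase δ par v then 0 else 1) ≤ T.dist u v := by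
  let f : V → ℤ := fun w => if rtop δ par w = rtop δ par u then (δ w : ℤ) else
    -(δ w : ℤ) - (if rbase δ par u = rbase δ par w then 0 else 1)
  have key : ∀ w, 0 < δ w → |f w - f (par w)| ≤ 1 := by
    intro w hw
    have hd := h.dp w hw
    have hb := h.base_par w
    rcases Nat.lt_or_ge (δ w) 2 with h2 | h2
    · have hp0 : δ (par w) = 0 := by omega
      have hw1 : δ w = 1 := by omega
      simp only [f, hb, top1 w hw1, top0 (par w) hp0, hp0, hw1]
      by_cases c1 : w = rtop δ par u
      · have : par w ≠ rtop δ par u := by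
          rw [← c1]; intro hh; rw [hh] at hp0; omega
        have h3 : rbase δ par u = rbase δ par w := by
          refine h.base_of_top ?_
          rw [top1 w hw1, c1]
        rw [if_pos c1, if_neg this, if_pos h3]; simp
      · by_cases c2 : par w = rtop δ par u
        · have h3 : rbase δ par u = rbase δ par w := by
            rw [← hb]
            refine h.base_of_top ?_
            rw [top0 _ hp0, c2]
          simp [c1, c2, h3]
        · simp [c1, c2]
    · simp only [f, hb, h.top_par w h2]
      have : (δ w : ℤ) = δ (par w) + 1 := by exact_mod_cast hd.symm
      split_ifs <;> rw [this] <;> ring_nf <;> norm_num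
  have key0 : ∀ w, δ w = 0 → f w = 0 ∨ f w = -1 := by
    intro w hw
    simp only [f, hw]
    split_ifs <;> simp
  have hl := lip_dist hc f (by
    intro a b hab
    rcases h.edge a b hab with ⟨h1, h2⟩ | ⟨h1, h2⟩ | ⟨h1, h2⟩
    · have := key0 a h1
      have := key0 b h2
      omega
    · have := abs_le.1 (key b h1)
      rw [h2]; linarith
    · have := abs_le.1 (key a h1)
      rw [h2]; linarith) u v
  have e1 : f u = δ u := by simp [f]
  have e2 : f v = -(δ v : ℤ) - (if rbase δ par u = rbase δ par v then 0 else 1) := by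
    simp [f, Ne.symm e]
  rw [e1, e2] at hl
  split_ifs at * <;> omega

end RT

theorem tree_par_unique {V : Type*} {T : SimpleGraph V} (hT : T.IsTree) (c v u w : V)
    (h1 : T.Adj v u) (h2 : T.Adj v w) (d1 : T.dist c u + 1 = T.dist c v)
    (d2 : T.dist c w + 1 = T.dist c v) : u = w := by
  obtain ⟨p, hp⟩ := hT.connected.exists_walk_length_eq_dist u c
  obtain ⟨q, hq⟩ := hT.connected.exists_walk_length_eq_dist w c
  have e1 : (SimpleGraph.Walk.cons h1 p).IsPath := by
    apply SimpleGraph.Walk.isPath_of_length_eq_dist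
    rw [SimpleGraph.Walk.length_cons, hp, SimpleGraph.dist_comm, d1, SimpleGraph.dist_comm]
  have e2 : (SimpleGraph.Walk.cons h2 q).IsPath := by
    apply SimpleGraph.Walk.isPath_of_length_eq_dist
    rw [SimpleGraph.Walk.length_cons, hq, SimpleGraph.dist_comm, d2, SimpleGraph.dist_comm]
  have := (hT.existsUnique_path v c).unique e1 e2
  have h3 := congrArg (fun r => r.getVert 1) this
  simpa using h3

theorem conn_split {V : Type*} {T : SimpleGraph V} (hc : T.Connected) (x y : V) (i j : ℕ)
    (h : T.dist x y = i + j) : ∃ c, T.dist x c = i ∧ T.dist c y = j := by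
  obtain ⟨p, hp⟩ := hc.exists_walk_length_eq_dist x y
  refine ⟨p.getVert i, ?_⟩
  have h1 := SimpleGraph.dist_le (p.take i)
  have h2 := SimpleGraph.dist_le (p.drop i)
  have h3 := hc.dist_triangle (u := x) (v := p.getVert i) (w := y)
  rw [SimpleGraph.Walk.take_length] at h1
  rw [SimpleGraph.Walk.drop_length] at h2
  omega

theorem tree_rt1 {V : Type*} {T : SimpleGraph V} (hT : T.IsTree) (c : V) :
    ∃ par, RT T (T.dist c) par := by
  have ex : ∀ v, ∃ u, (T.dist c v = 0 → u = v) ∧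
      (0 < T.dist c v → T.Adj v u ∧ T.dist c u + 1 = T.dist c v) := by
    intro v
    rcases Nat.eq_zero_or_pos (T.dist c v) with h0 | h0
    · exact ⟨v, fun _ => rfl, fun h => by omega⟩
    · obtain ⟨u, hu, hu'⟩ := conn_split hT.connected c v (T.dist c v - 1) 1 (by omega)
      exact ⟨u, fun h => by omega,
        fun _ => ⟨(SimpleGraph.dist_eq_one_iff_adj.1 hu').symm, by omega⟩⟩
  choose par hp using ex
  refine ⟨par, fun v => (hp v).1, fun v h => ((hp v).2 h).1, fun v h => ((hp v).2 h).2, ?_, ?_⟩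
  · intro u v h
    rcases hT.dist_eq_dist_add_one_of_adj c h with e | e
    · right; right
      have := (hp u).2 (by omega)
      exact ⟨by omega, tree_par_unique hT c u _ _ h this.1 e.symm this.2⟩
    · right; left
      have := (hp v).2 (by omega)
      exact ⟨by omega, tree_par_unique hT c v _ _ h.symm this.1 e.symm this.2⟩
  · intro u v h1 h2 h3
    rw [hT.connected.dist_eq_zero_iff] at h1 h2
    exact absurd (h1.symm.trans h2) h3

theorem tree_rt2 {V : Type*} {T : SimpleGraph V} (hT : T.IsTree) (a b : V) (hab : T.Adj a b) :
    ∃ par, RT T (fun v => min (T.dist a v) (T.dist b v)) par := by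
  have key : ∀ u v, T.Adj u v → T.dist a v + 1 = T.dist a u →
      (u = b ∧ v = a) ∨ T.dist b v + 1 = T.dist b u := by
    intro u v h h1
    have hc := hT.connected
    rcases hT.dist_eq_dist_add_one_of_adj b h with e | e
    · exact Or.inr e.symm
    left
    -- v is further from b than u
    have hab1 := SimpleGraph.dist_eq_one_iff_adj.2 hab
    have t1 := hc.dist_triangle (u := a) (v := b) (w := u)
    have t2 := hc.dist_triangle (u := b) (v := a) (w := v)
    have := SimpleGraph.dist_comm (G := T) (u := a) (v := b)
    have hva : v = a := by
      by_contra hne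
      have hpos := hc.pos_dist_of_ne (Ne.symm hne)
      obtain ⟨w, hw, hw'⟩ := conn_split hT.connected a v (T.dist a v - 1) 1 (by omega)
      have t3 := hc.dist_triangle (u := b) (v := a) (w := w)
      have t4 := hc.dist_triangle (u := b) (v := w) (w := v)
      have : u = w := tree_par_unique hT b v u w h.symm
        (SimpleGraph.dist_eq_one_iff_adj.1 hw').symm (by omega) (by omega)
      subst this
      omega
    subst hva
    rw [SimpleGraph.dist_self] at *
    refine ⟨(hc.dist_eq_zero_iff.1 (by omega : T.dist b u = 0)).symm, rfl⟩
  obtain ⟨pa, ha⟩ := tree_rt1 hT a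
  have hab1 := SimpleGraph.dist_eq_one_iff_adj.2 hab
  have hba1 := SimpleGraph.dist_eq_one_iff_adj.2 hab.symm
  have hc := hT.connected
  have z : ∀ v, min (T.dist a v) (T.dist b v) = 0 ↔ v = a ∨ v = b := by
    intro v
    rw [eq_comm (a := v), eq_comm (a := v), ← hc.dist_eq_zero_iff, ← hc.dist_eq_zero_iff]
    omega
  have key2 : ∀ u v, T.Adj u v → T.dist a v + 1 = T.dist a u → (u = b ∧ v = a) ∨
      (min (T.dist a v) (T.dist b v) + 1 = min (T.dist a u) (T.dist b u)) := by
    intro u v h h1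
    rcases key u v h h1 with h2 | h2
    · exact Or.inl h2
    · right; omega
  classical
  refine ⟨fun v => if v = b then b else pa v, ?_, ?_, ?_, ?_, ?_⟩
  · intro v hv
    rcases (z v).1 hv with rfl | rfl
    · rw [if_neg hab.ne]; exact ha.par0 v (by simp)
    · simp
  · intro v hv
    have := mt (z v).2 hv.ne'
    push Not at this
    simp only [if_neg this.2]
    exact ha.adjp v (hc.pos_dist_of_ne (Ne.symm this.1))
  · intro v hv
    have := mt (z v).2 hv.ne'
    push Not at this
    simp only [if_neg this.2]
    have hp := (hc.pos_dist_of_ne (Ne.symm this.1))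
    have := key2 v (pa v) (ha.adjp v hp) (ha.dp v hp)
    tauto
  · have half : ∀ u v, T.Adj u v → T.dist a v + 1 = T.dist a u →
        (min (T.dist a u) (T.dist b u) = 0 ∧ min (T.dist a v) (T.dist b v) = 0) ∨
        (0 < min (T.dist a u) (T.dist b u) ∧ v = if u = b then b else pa u) := by
      intro u v h h1
      have h3 : v = pa u := tree_par_unique hT a u _ _ h (ha.adjp u (by omega)) h1
        (ha.dp u (by omega))
      rcases key2 u v h h1 with ⟨h2, h4⟩ | h2
      · left; exact ⟨(z u).2 (Or.inr h2), (z v).2 (Or.inl h4)⟩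
      · right
        refine ⟨by omega, ?_⟩
        rw [if_neg, h3]
        intro hh
        have := (z u).2 (Or.inr hh)
        omega
    intro u v h
    rcases hT.dist_eq_dist_add_one_of_adj a h with e | e
    · have := half u v h e.symm
      tauto
    · have := half v u h.symm e.symm
      tauto
  · intro u v hu hv hne
    rcases (z u).1 hu with rfl | rfl <;> rcases (z v).1 hv with rfl | rfl
    · exact absurd rfl hne
    · exact hab
    · exact hab.symm
    · exact absurd rfl hne

structure GRT {V : Type*} (T : SimpleGraph V) (δ : V → ℕ) (par : V → V) (m : ℕ) : Prop where
  rt : RT T δ par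
  le : ∀ v, δ v ≤ m
  uniq : ∀ u v, 0 < δ v → δ u = δ v → rtop δ par u = rtop δ par v → u = v
  exi : ∀ t j, δ t = 1 → j < m → ∃ v, δ v = j + 1 ∧ rtop δ par v = t

theorem RT.desc {V : Type*} {T : SimpleGraph V} {δ : V → ℕ} {par : V → V} {m : ℕ}
    (h : RT T δ par) (h1 : ∀ l, IsLeaf T l → δ l = m) (h3 : ∀ v, δ v ≤ m) (n : ℕ) :
    ∀ v, 0 < δ v → m - δ v = n → ∃ l, IsLeaf T l ∧ par^[n] l = v := by
  induction n with
  | zero =>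
    intro v hv hn
    refine ⟨v, ?_, rfl⟩
    have hs : T.neighborSet v = {par v} := by
      ext w
      simp only [SimpleGraph.mem_neighborSet, Set.mem_singleton_iff]
      constructor
      · intro hw
        rcases h.edge v w hw with e | e | e
        · omega
        · have := h.dp w e.1
          rw [← e.2] at this
          have := h3 w
          omega
        · exact e.2
      · rintro rfl
        exact h.adjp v hv
    rw [IsLeaf, hs, Set.ncard_singleton]
  | succ n ih =>
    intro v hv hn
    have : ∃ w, T.Adj v w ∧ w ≠ par v := by
      by_contra hcon
      push Not at hcon
      have hs : T.neighborSet v = {par v} := by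
        ext w
        simp only [SimpleGraph.mem_neighborSet, Set.mem_singleton_iff]
        exact ⟨hcon w, by rintro rfl; exact h.adjp v hv⟩
      have := h1 v (by rw [IsLeaf, hs, Set.ncard_singleton])
      omega
    obtain ⟨w, hw, hw'⟩ := this
    rcases h.edge v w hw with e | e | e
    · omega
    · have hd := h.dp w e.1
      rw [← e.2] at hd
      obtain ⟨l, hl, hl'⟩ := ih w e.1 (by omega)
      exact ⟨l, hl, by rw [Function.iterate_succ_apply', hl', ← e.2]⟩
    · exact absurd e.2 hw'

theorem RT.grt {V : Type*} {T : SimpleGraph V} {δ : V → ℕ} {par : V → V} {m : ℕ}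
    (h : RT T δ par) (h1 : ∀ l, IsLeaf T l → δ l = m) (h3 : ∀ v, δ v ≤ m)
    (h2 : ∀ l l', IsLeaf T l → IsLeaf T l' → rtop δ par l = rtop δ par l' → l = l') :
    GRT T δ par m := by
  have key : ∀ v l, 0 < δ v → δ l = m → par^[m - δ v] l = v →
      rtop δ par l = rtop δ par v := by
    intro v l hv hl e
    have := h3 v
    have e2 : m - 1 = (δ v - 1) + (m - δ v) := by omega
    rw [rtop, hl, e2, Function.iterate_add_apply, e, rtop]
  refine ⟨h, h3, ?_, ?_⟩
  · intro u v hv huv ht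
    obtain ⟨l, hl, e⟩ := h.desc h1 h3 _ v hv rfl
    obtain ⟨l', hl', e'⟩ := h.desc h1 h3 _ u (by omega) rfl
    have := key v l hv (h1 l hl) e
    have := key u l' (by omega) (h1 l' hl') e'
    have := h2 l l' hl hl' (by simp_all)
    rw [← e, ← e', huv, this]
  · intro t j ht hj
    obtain ⟨l, hl, e⟩ := h.desc h1 h3 _ t (by omega) rfl
    have hlm := h1 l hl
    have hd : δ (par^[m - 1 - j] l) = j + 1 := by
      rw [h.d_iter _ _ (by omega)]; omega
    refine ⟨par^[m - 1 - j] l, hd, ?_⟩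
    rw [rtop, hd, Nat.add_sub_cancel, ← Function.iterate_add_apply, ← e, ht]
    congr 1
    omega

theorem GRT.adj_iff {V : Type*} {T : SimpleGraph V} {δ : V → ℕ} {par : V → V} {m : ℕ}
    (h : GRT T δ par m) (u v : V) (hu : 0 < δ u) (hv : 0 < δ v) :
    T.Adj u v ↔ rtop δ par u = rtop δ par v ∧ (δ u + 1 = δ v ∨ δ v + 1 = δ u) := by
  constructor
  · intro ha
    rcases h.rt.edge u v ha with e | e | e
    · omega
    · have := h.rt.dp v hv
      rw [e.2] at hu ⊢
      exact ⟨h.rt.top_par v (by omega), by omega⟩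
    · have := h.rt.dp u hu
      rw [e.2] at hv ⊢
      exact ⟨(h.rt.top_par u (by omega)).symm, by omega⟩
  · rintro ⟨e, e1 | e1⟩
    · have := h.rt.dp v hv
      have : u = par v := h.uniq _ _ (by omega) (by omega)
        (by rw [e, h.rt.top_par v (by omega)])
      rw [this]; exact (h.rt.adjp v hv).symm
    · have := h.rt.dp u hu
      have : v = par u := h.uniq _ _ (by omega) (by omega)
        (by rw [← e, h.rt.top_par u (by omega)])
      rw [this]; exact (h.rt.adjp u hu)

theorem GRT.adj_core {V : Type*} {T : SimpleGraph V} {δ : V → ℕ} {par : V → V} {m : ℕ}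
    (h : GRT T δ par m) (u v : V) (hu : δ u = 0) (hv : 0 < δ v) :
    T.Adj u v ↔ δ v = 1 ∧ par (rtop δ par v) = u := by
  constructor
  · intro ha
    rcases h.rt.edge u v ha with e | e | e
    · omega
    · have := h.rt.dp v hv
      rw [e.2] at hu
      refine ⟨by omega, ?_⟩
      rw [RT.top1 v (by omega), e.2]
    · omega
  · rintro ⟨e, e1⟩
    rw [RT.top1 v e] at e1
    rw [← e1]; exact (h.rt.adjp v hv).symm

theorem iso_of_bij {V W : Type*} {T : SimpleGraph V} {H : SimpleGraph W} (φ : W → V)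
    (inj : Function.Injective φ) (surj : Function.Surjective φ)
    (hφ : ∀ u v, T.Adj (φ u) (φ v) ↔ H.Adj u v) : Nonempty (T ≃g H) :=
  ⟨SimpleGraph.Iso.symm ⟨Equiv.ofBijective φ ⟨inj, surj⟩, fun {u v} => hφ u v⟩⟩

theorem GRT.spider_iso {V : Type*} [Fintype V] {T : SimpleGraph V} {δ : V → ℕ} {par : V → V}
    {m : ℕ} (h : GRT T δ par m) (c : V) (hc : ∀ v, δ v = 0 ↔ v = c) (x y : V)
    (hx : δ x = 1) (hy : δ y = 1) (hxy : x ≠ y) :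
    ∃ p, 2 ≤ p ∧ Nonempty (T ≃g spider p m) := by
  classical
  let A := {t : V // δ t = 1}
  let e : Fin (Fintype.card A) ≃ A := (Fintype.equivFin A).symm
  have ex : ∀ (t : A) (j : Fin m), ∃ v, δ v = j + 1 ∧ rtop δ par v = t :=
    fun t j => h.exi t j t.2 j.2
  choose P hP1 hP2 using ex
  let φ : Option (Fin (Fintype.card A) × Fin m) → V := fun o =>
    match o with
    | none => c
    | some (i, j) => P (e i) j
  have hc0 : δ c = 0 := (hc c).2 rfl
  have hPpos : ∀ t j, 0 < δ (P t j) := fun t j => by rw [hP1]; omega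
  have inj : Function.Injective φ := by
    rintro (_ | ⟨i, j⟩) (_ | ⟨i', j'⟩) hh
    · rfl
    · have := hPpos (e i') j'
      simp only [φ] at hh
      rw [← hh] at this; omega
    · have := hPpos (e i) j
      simp only [φ] at hh
      rw [hh] at this; omega
    · simp only [φ] at hh
      have h1 := hP1 (e i) j
      have h2 := hP2 (e i) j
      rw [hh, hP1] at h1
      rw [hh, hP2] at h2
      have h3 : i' = i := e.injective (Subtype.ext h2)
      have h4 : j' = j := Fin.ext (by omega)
      rw [h3, h4]
  have surj : Function.Surjective φ := by
    intro v
    rcases Nat.eq_zero_or_pos (δ v) with h0 | h0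
    · exact ⟨none, ((hc v).1 h0).symm⟩
    · have := h.le v
      refine ⟨some (e.symm ⟨rtop δ par v, h.rt.d_top v h0⟩, ⟨δ v - 1, by omega⟩), ?_⟩
      simp only [φ, Equiv.apply_symm_apply]
      refine h.uniq _ _ h0 ?_ ?_
      · rw [hP1]; simp only; omega
      · rw [hP2]
  refine ⟨Fintype.card A, ?_, iso_of_bij φ inj surj ?_⟩
  · have : 1 < Fintype.card A :=
      Fintype.one_lt_card_iff.2 ⟨⟨x, hx⟩, ⟨y, hy⟩, fun hh => hxy (congrArg Subtype.val hh)⟩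
    exact this
  · have cc : ∀ t j, T.Adj c (P t j) ↔ (j : ℕ) = 0 := by
      intro t j
      rw [h.adj_core c _ hc0 (hPpos t j), hP1, hP2]
      have : par t.1 = c := by
        rw [← hc]; have := h.rt.dp t.1 (by rw [t.2]; omega)
        have := t.2
        omega
      simp [this]
    rintro (_ | ⟨i, j⟩) (_ | ⟨i', j'⟩)
    · simp [φ, spider]
    · simp [φ, spider, cc]
    · simp only [φ, T.adj_comm _ c, cc]
      simp [spider]
    · simp only [φ]
      rw [h.adj_iff _ _ (hPpos _ _) (hPpos _ _), hP2, hP2, hP1, hP1]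
      have : ((e i : A) : V) = e i' ↔ i = i' := by
        rw [← Subtype.ext_iff, e.apply_eq_iff_eq]
      rw [this]
      simp only [spider, SimpleGraph.fromRel_adj]
      constructor
      · rintro ⟨rfl, h1⟩
        refine ⟨?_, ?_⟩
        · intro hh
          simp only [Option.some.injEq, Prod.mk.injEq, true_and] at hh
          rw [hh] at h1
          omega
        · omega
      · rintro ⟨_, h1 | h1⟩
        · exact ⟨h1.1, by omega⟩
        · exact ⟨h1.1.symm, by omega⟩

theorem GRT.btree_iso {V : Type*} [Fintype V] {T : SimpleGraph V} {δ : V → ℕ} {par : V → V}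
    {m : ℕ} (h : GRT T δ par m) (a b : V) (hab : a ≠ b) (hc : ∀ v, δ v = 0 ↔ v = a ∨ v = b)
    (x y : V) (hx : δ x = 1) (hy : δ y = 1) (hxa : par x = a) (hyb : par y = b) :
    ∃ p₁ p₂, 1 ≤ p₁ ∧ 1 ≤ p₂ ∧ Nonempty (T ≃g btree p₁ p₂ m) := by
  classical
  let A := {t : V // δ t = 1 ∧ par t = a}
  let B := {t : V // δ t = 1 ∧ par t = b}
  let e1 : Fin (Fintype.card A) ≃ A := (Fintype.equivFin A).symm
  let e2 : Fin (Fintype.card B) ≃ B := (Fintype.equivFin B).symm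
  let e : Fin (Fintype.card A) ⊕ Fin (Fintype.card B) → V :=
    Sum.elim (fun i => (e1 i).1) (fun i => (e2 i).1)
  have he1 : ∀ s, δ (e s) = 1 := by
    rintro (i | i)
    · exact (e1 i).2.1
    · exact (e2 i).2.1
  have hea : ∀ i, par (e (Sum.inl i)) = a := fun i => (e1 i).2.2
  have heb : ∀ i, par (e (Sum.inr i)) = b := fun i => (e2 i).2.2
  have einj : Function.Injective e := by
    rintro (i | i) (j | j) hh
    · exact congrArg _ (e1.injective (Subtype.ext hh))
    · exact absurd ((hea i).symm.trans ((congrArg par hh).trans (heb j))) hab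
    · exact absurd ((hea j).symm.trans ((congrArg par hh.symm).trans (heb i))) hab
    · exact congrArg _ (e2.injective (Subtype.ext hh))
  have esurj : ∀ t, δ t = 1 → ∃ s, e s = t := by
    intro t ht
    have := h.rt.dp t (by omega)
    rcases (hc (par t)).1 (by omega) with h1 | h1
    · exact ⟨Sum.inl (e1.symm ⟨t, ht, h1⟩), by simp [e]⟩
    · exact ⟨Sum.inr (e2.symm ⟨t, ht, h1⟩), by simp [e]⟩
  have ex : ∀ (s : Fin (Fintype.card A) ⊕ Fin (Fintype.card B)) (j : Fin m),
    ∃ v, δ v = j + 1 ∧ rtop δ par v = e s :=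
    fun s j => h.exi _ j (he1 s) j.2
  choose P hP1 hP2 using ex
  let φ : Bool ⊕ ((Fin (Fintype.card A) ⊕ Fin (Fintype.card B)) × Fin m) → V :=
    Sum.elim (fun x => cond x b a) (fun q => P q.1 q.2)
  have ha0 : δ a = 0 := (hc a).2 (Or.inl rfl)
  have hb0 : δ b = 0 := (hc b).2 (Or.inr rfl)
  have hx0 : ∀ x : Bool, δ (cond x b a) = 0 := by rintro (_ | _) <;> assumption
  have hPpos : ∀ t j, 0 < δ (P t j) := fun t j => by rw [hP1]; omega
  have inj : Function.Injective φ := by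
    rintro (x | ⟨i, j⟩) (x' | ⟨i', j'⟩) hh
    · simp only [φ, Sum.elim_inl] at hh
      cases x <;> cases x' <;> simp_all
    · have := hPpos i' j'
      simp only [φ, Sum.elim_inl, Sum.elim_inr] at hh
      rw [← hh, hx0] at this; omega
    · have := hPpos i j
      simp only [φ, Sum.elim_inl, Sum.elim_inr] at hh
      rw [hh, hx0] at this; omega
    · simp only [φ, Sum.elim_inr] at hh
      have h1 := hP1 i j
      have h2 := hP2 i j
      rw [hh, hP1] at h1
      rw [hh, hP2] at h2
      have h3 : i' = i := einj h2
      have h4 : j' = j := Fin.ext (by omega)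
      rw [h3, h4]
  have surj : Function.Surjective φ := by
    intro v
    rcases Nat.eq_zero_or_pos (δ v) with h0 | h0
    · rcases (hc v).1 h0 with h1 | h1
      · exact ⟨Sum.inl false, h1.symm⟩
      · exact ⟨Sum.inl true, h1.symm⟩
    · have := h.le v
      obtain ⟨s, hs⟩ := esurj _ (h.rt.d_top v h0)
      refine ⟨Sum.inr (s, ⟨δ v - 1, by omega⟩), ?_⟩
      simp only [φ, Sum.elim_inr]
      refine h.uniq _ _ h0 ?_ ?_
      · rw [hP1]; simp only; omega
      · rw [hP2, hs]
  refine ⟨Fintype.card A, Fintype.card B, ?_, ?_,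
    iso_of_bij φ inj surj ?_⟩
  · exact Fintype.card_pos_iff.2 ⟨⟨x, hx, hxa⟩⟩
  · exact Fintype.card_pos_iff.2 ⟨⟨y, hy, hyb⟩⟩
  · have cc : ∀ (x : Bool) s j, T.Adj (cond x b a) (P s j) ↔
        (j : ℕ) = 0 ∧ par (e s) = cond x b a := by
      intro x s j
      rw [h.adj_core _ _ (hx0 x) (hPpos s j), hP1, hP2]
      simp
    have hadj : T.Adj a b := h.rt.compl a b ha0 hb0 hab
    have cb : ∀ (x : Bool) s (j : Fin m), ((j : ℕ) = 0 ∧ par (e s) = cond x b a) ↔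
        (btree (Fintype.card A) (Fintype.card B) m).Adj (Sum.inl x) (Sum.inr (s, j)) := by
      rintro (_ | _) (i | i) j
      · simp [btree, hea]
      · simp [btree, heb, hab.symm]
      · simp [btree, hea, hab]
      · simp [btree, heb]
    rintro (x | ⟨i, j⟩) (x' | ⟨i', j'⟩)
    · cases x <;> cases x' <;> simp [φ, btree, hadj, hadj.symm]
    · simp only [φ, Sum.elim_inl, Sum.elim_inr]
      rw [cc, cb]
    · simp only [φ, Sum.elim_inl, Sum.elim_inr]
      rw [SimpleGraph.adj_comm, cc, cb, SimpleGraph.adj_comm]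
    · simp only [φ, Sum.elim_inr]
      rw [h.adj_iff _ _ (hPpos _ _) (hPpos _ _), hP2, hP2, hP1, hP1]
      rw [einj.eq_iff]
      simp only [btree, SimpleGraph.fromRel_adj]
      constructor
      · rintro ⟨rfl, h1⟩
        refine ⟨?_, ?_⟩
        · intro hh
          simp only [Sum.inr.injEq, Prod.mk.injEq, true_and] at hh
          rw [hh] at h1
          omega
        · rcases h1 with h1 | h1
          · exact Or.inl ⟨rfl, by omega⟩
          · exact Or.inr ⟨rfl, by omega⟩
      · rintro ⟨_, h1 | h1⟩
        · exact ⟨h1.1, by omega⟩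
        · exact ⟨h1.1.symm, by omega⟩

theorem dist_le_gdiam {V : Type*} [Fintype V] (T : SimpleGraph V) (u v : V) :
    T.dist u v ≤ gdiam T :=
  le_trans (Finset.le_sup (f := T.dist u) (Finset.mem_univ v))
    (Finset.le_sup (f := ecc T) (Finset.mem_univ u))

theorem exists_gdiam {V : Type*} [Fintype V] [Nonempty V] (T : SimpleGraph V) :
    ∃ u v, T.dist u v = gdiam T := by
  obtain ⟨u, -, hu⟩ := Finset.exists_mem_eq_sup Finset.univ Finset.univ_nonempty (ecc T)
  obtain ⟨v, -, hv⟩ := Finset.exists_mem_eq_sup Finset.univ Finset.univ_nonempty (T.dist u)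
  exact ⟨u, v, by rw [gdiam, hu, ecc, hv]⟩

theorem leaf_unique {V : Type*} {T : SimpleGraph V} {l u v : V} (h : IsLeaf T l)
    (hu : T.Adj l u) (hv : T.Adj l v) : u = v := by
  obtain ⟨a, ha⟩ := Set.ncard_eq_one.1 h
  have h1 : u ∈ T.neighborSet l := hu
  have h2 : v ∈ T.neighborSet l := hv
  rw [ha] at h1 h2
  exact h1.trans h2.symm

section
variable {V : Type*} {T : SimpleGraph V} {δ : V → ℕ} {par : V → V} {m : ℕ}

theorem RT.ball_eq (h : RT T δ par) (hc : T.Connected) (hm : 1 ≤ m) (hle : ∀ v, δ v ≤ m)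
    (u v : V) (hd : δ u = δ v) (ht : rtop δ par u = rtop δ par v) :
    ball T (2 * m - 1) u = ball T (2 * m - 1) v := by
  classical
  ext w
  change T.dist u w ≤ _ ↔ T.dist v w ≤ _
  have hu := hle u
  have hw := hle w
  by_cases e : rtop δ par u = rtop δ par w
  · have h1 := h.dist_le_top hc u w e
    have h2 := h.dist_le_top hc v w (ht.symm.trans e)
    omega
  · have hb := h.base_of_top ht
    have h1 := h.dist_le hc u w
    have h2 := h.dist_le hc v w
    have h3 := h.le_dist hc u w e
    have h4 := h.le_dist hc v w (by rwa [← ht])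
    rw [hb] at h1 h3
    omega

theorem RT.fwd1 (h : RT T δ par) (hc : T.Connected) (hm : 2 ≤ m) (hle : ∀ v, δ v ≤ m)
    (c : V) (hcc : ∀ v, δ v = 0 ↔ v = c) (x : V) (hx : δ x = m)
    (hno : ∀ l, IsLeaf T l → ¬ KTwin T (2 * m - 1) l) : GRT T δ par m := by
  classical
  have hb : ∀ v, rbase δ par v = c := fun v => (hcc _).1 (h.d_base v)
  have hdist : ∀ u v, T.dist u v ≤ δ u + δ v := by
    intro u v
    have := h.dist_le hc u v
    rwa [hb, hb, if_pos rfl] at this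
  have full : ∀ u, δ u < m → ball T (2 * m - 1) u = Set.univ := by
    intro u hu
    refine Set.eq_univ_of_forall fun v => ?_
    change T.dist u v ≤ _
    have := hdist u v
    have := hle v
    omega
  have h1 : ∀ l, IsLeaf T l → δ l = m := by
    intro l hl
    by_contra hne
    have hlt : δ l < m := lt_of_le_of_ne (hle l) hne
    apply hno l hl
    have hc0 : δ c = 0 := (hcc c).2 rfl
    have ht := h.d_top x (by omega)
    by_cases e : c = l
    · refine ⟨rtop δ par x, ?_, ?_⟩
      · rintro rfl; rw [e] at hc0; omega
      · rw [full l hlt, full _ (by omega)]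
    · exact ⟨c, e, by rw [full l hlt, full _ (by omega)]⟩
  refine h.grt h1 hle ?_
  intro l l' hl hl' ht
  by_contra hne
  exact hno l hl ⟨l', Ne.symm hne, h.ball_eq hc (by omega) hle l l' (by rw [h1 l hl, h1 l' hl']) ht⟩

theorem RT.fwd2 (h : RT T δ par) (hc : T.Connected) (hm : 2 ≤ m) (hle : ∀ v, δ v ≤ m)
    (a b : V) (hab : a ≠ b) (hcc : ∀ v, δ v = 0 ↔ v = a ∨ v = b)
    (x y : V) (hx : δ x = m) (hy : δ y = m) (hxa : rbase δ par x = a) (hyb : rbase δ par y = b)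
    (hno : ∀ l, IsLeaf T l → ¬ KTwin T (2 * m - 1) l) : GRT T δ par m := by
  classical
  have full : ∀ u, δ u < m - 1 → ball T (2 * m - 1) u = Set.univ := by
    intro u hu
    refine Set.eq_univ_of_forall fun v => ?_
    change T.dist u v ≤ _
    have := h.dist_le hc u v
    have := hle v
    split_ifs at * <;> omega
  have sub : ∀ u, δ u = m - 1 → ∀ v, T.dist u v ≤ 2 * m - 1 ↔
      ¬ (δ v = m ∧ rbase δ par u ≠ rbase δ par v) := by
    intro u hu v
    have h1 := h.dist_le hc u v
    have h2 := hle v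
    by_cases e : rbase δ par u = rbase δ par v
    · rw [if_pos e] at h1
      simp only [e, ne_eq, not_true, and_false, not_false_iff, iff_true]
      omega
    · have h3 := h.le_dist hc u v (fun hh => e (h.base_of_top hh))
      rw [if_neg e] at h1 h3
      simp only [ne_eq, e, not_false_iff, and_true]
      omega
  have h1 : ∀ l, IsLeaf T l → δ l = m := by
    intro l hl
    by_contra hne
    have hlt : δ l < m := lt_of_le_of_ne (hle l) hne
    apply hno l hl
    rcases Nat.lt_or_ge (δ l) (m - 1) with hl1 | hl1
    · have ha0 : δ a = 0 := (hcc a).2 (Or.inl rfl)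
      have hb0 : δ b = 0 := (hcc b).2 (Or.inr rfl)
      by_cases e : a = l
      · refine ⟨b, by rw [← e]; exact hab.symm, by rw [full l hl1, full _ (by omega)]⟩
      · exact ⟨a, e, by rw [full l hl1, full _ (by omega)]⟩
    · obtain ⟨z, hz, hzb⟩ : ∃ z, δ z = m ∧ rbase δ par z = rbase δ par l := by
        rcases (hcc _).1 (h.d_base l) with e | e
        · exact ⟨x, hx, by rw [hxa, e]⟩
        · exact ⟨y, hy, by rw [hyb, e]⟩
      have hdp := h.dp z (by omega)
      refine ⟨par z, ?_, ?_⟩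
      · rintro rfl
        have := leaf_unique hl (h.adjp z (by omega)).symm (h.adjp (par z) (by omega))
        have h2 := h.dp (par z) (by omega)
        rw [← this] at h2
        omega
      · ext v
        change T.dist l v ≤ _ ↔ T.dist (par z) v ≤ _
        rw [sub l (by omega), sub (par z) (by omega), h.base_par, hzb]
  refine h.grt h1 hle ?_
  intro l l' hl hl' ht
  by_contra hne
  exact hno l hl ⟨l', Ne.symm hne, h.ball_eq hc (by omega) hle l l' (by rw [h1 l hl, h1 l' hl']) ht⟩

theorem RT.rev (h : RT T δ par) (hc : T.Connected) (hm : 1 ≤ m) (hle : ∀ v, δ v ≤ m)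
    (uniq : ∀ u v, δ u = m → δ v = m → rtop δ par u = rtop δ par v → u = v)
    (h1 : ∀ l, IsLeaf T l → δ l = m)
    (h2 : ∀ l, δ l = m → ∃ z, 2 * m ≤ T.dist l z ∧ ∀ v, 2 * m ≤ T.dist v z → δ v = m) :
    ∀ l, IsLeaf T l → ¬ KTwin T (2 * m - 1) l := by
  classical
  rintro l hl ⟨v, hv, e⟩
  obtain ⟨z, hz, hz'⟩ := h2 l (h1 l hl)
  have e1 : T.dist l z ≤ 2 * m - 1 ↔ T.dist v z ≤ 2 * m - 1 := Set.ext_iff.1 e z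
  have e2 : T.dist l l ≤ 2 * m - 1 ↔ T.dist v l ≤ 2 * m - 1 := Set.ext_iff.1 e l
  have hvm := hz' v (by omega)
  have := h.le_dist hc v l (fun hh => hv (uniq v l hvm (h1 l hl) hh))
  rw [SimpleGraph.dist_self] at e2
  have := h1 l hl
  omega

theorem RT.rev1 (h : RT T δ par) (hc : T.Connected) (hm : 1 ≤ m) (hle : ∀ v, δ v ≤ m)
    (uniq : ∀ u v, δ u = m → δ v = m → rtop δ par u = rtop δ par v → u = v)
    (h1 : ∀ l, IsLeaf T l → δ l = m) (hcc : ∀ u v, δ u = 0 → δ v = 0 → u = v)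
    (x y : V) (hx : δ x = m) (hy : δ y = m) (hxy : rtop δ par x ≠ rtop δ par y) :
    ∀ l, IsLeaf T l → ¬ KTwin T (2 * m - 1) l := by
  classical
  refine h.rev hc hm hle uniq h1 fun l hl => ?_
  obtain ⟨z, hz, hzl⟩ : ∃ z, δ z = m ∧ rtop δ par l ≠ rtop δ par z := by
    by_cases e : rtop δ par l = rtop δ par x
    · exact ⟨y, hy, by rwa [e]⟩
    · exact ⟨x, hx, e⟩
  refine ⟨z, ?_, fun v hv => ?_⟩
  · have := h.le_dist hc l z hzl
    omega
  · have := h.dist_le hc v z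
    rw [if_pos (hcc _ _ (h.d_base v) (h.d_base z))] at this
    have := hle v
    omega

theorem RT.rev2 (h : RT T δ par) (hc : T.Connected) (hm : 1 ≤ m) (hle : ∀ v, δ v ≤ m)
    (uniq : ∀ u v, δ u = m → δ v = m → rtop δ par u = rtop δ par v → u = v)
    (h1 : ∀ l, IsLeaf T l → δ l = m)
    (x y : V) (hx : δ x = m) (hy : δ y = m) (hxy : rbase δ par x ≠ rbase δ par y) :
    ∀ l, IsLeaf T l → ¬ KTwin T (2 * m - 1) l := by
  classical
  refine h.rev hc hm hle uniq h1 fun l hl => ?_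
  obtain ⟨z, hz, hzl⟩ : ∃ z, δ z = m ∧ rbase δ par l ≠ rbase δ par z := by
    by_cases e : rbase δ par l = rbase δ par x
    · exact ⟨y, hy, by rwa [e]⟩
    · exact ⟨x, hx, e⟩
  have hdp := h.dp z (by omega)
  have hbp := h.base_par z
  refine ⟨par z, ?_, fun v hv => ?_⟩
  · have := h.le_dist hc l (par z) (fun hh => hzl (by rw [← hbp]; exact h.base_of_top hh))
    rw [hbp, if_neg hzl] at this
    omega
  · have := h.dist_le hc v (par z)
    have := hle v
    split_ifs at * <;> omega

theorem RT.top_inv (h : RT T δ par) {α : Type*} (g : V → α)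
    (hg : ∀ v, 2 ≤ δ v → g (par v) = g v) (v : V) : g (rtop δ par v) = g v := by
  induction hn : δ v generalizing v with
  | zero => rw [RT.top0 v hn]
  | succ n ih =>
    rcases Nat.eq_zero_or_pos n with h0 | h0
    · rw [RT.top1 v (by omega)]
    · have := h.dp v (by omega)
      rw [← h.top_par v (by omega), ih _ (by omega), hg v (by omega)]

theorem RT.base_inv (h : RT T δ par) {α : Type*} (g : V → α)
    (hg : ∀ v, 0 < δ v → g (par v) = g v) (v : V) : g (rbase δ par v) = g v := by
  induction hn : δ v generalizing v with
  | zero => rw [RT.base0 v hn]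
  | succ n ih =>
    have := h.dp v (by omega)
    rw [← h.base_par v, ih _ (by omega), hg v (by omega)]
end

theorem iso_dist_le {V W : Type*} {T : SimpleGraph V} {H : SimpleGraph W} (e : T ≃g H)
    (hT : T.Connected) (u v : V) : H.dist (e u) (e v) ≤ T.dist u v := by
  obtain ⟨p, hp⟩ := hT.exists_walk_length_eq_dist u v
  rw [← hp, ← SimpleGraph.Walk.length_map e.toHom p]
  exact SimpleGraph.dist_le _

theorem iso_transfer {V W : Type*} {T : SimpleGraph V} {H : SimpleGraph W} (e : T ≃g H)
    (hT : T.Connected) (k : ℕ) (h : ∀ l, IsLeaf H l → ¬ KTwin H k l) :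
    ∀ l, IsLeaf T l → ¬ KTwin T k l := by
  have hH : H.Connected := e.connected_iff.1 hT
  have hd : ∀ u v, H.dist (e u) (e v) = T.dist u v := by
    intro u v
    refine le_antisymm (iso_dist_le e hT u v) ?_
    have := iso_dist_le e.symm hH (e u) (e v)
    simpa using this
  rintro l hl ⟨v, hv, hb⟩
  refine h (e l) ?_ ⟨e v, fun hh => hv (e.injective hh), ?_⟩
  · have : H.neighborSet (e l) = e '' T.neighborSet l := by
      ext w
      obtain ⟨w, rfl⟩ := e.surjective w
      simp [e.map_adj_iff]
    rw [IsLeaf, this, Set.ncard_image_of_injective _ e.injective]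
    exact hl
  · ext w
    obtain ⟨w, rfl⟩ := e.surjective w
    have : T.dist l w ≤ k ↔ T.dist v w ≤ k := Set.ext_iff.1 hb w
    change H.dist _ _ ≤ k ↔ H.dist _ _ ≤ k
    rwa [hd, hd]

def spD (p m : ℕ) : Option (Fin p × Fin m) → ℕ
  | none => 0
  | some (_, j) => (j : ℕ) + 1

def spP (p m : ℕ) : Option (Fin p × Fin m) → Option (Fin p × Fin m)
  | none => none
  | some (i, j) => if (j : ℕ) = 0 then none else some (i, ⟨j - 1, by omega⟩)

theorem spider_rt (p m : ℕ) : RT (spider p m) (spD p m) (spP p m) := by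
  refine ⟨?_, ?_, ?_, ?_, ?_⟩
  · rintro (_ | ⟨i, j⟩) h
    · rfl
    · simp [spD] at h
  · rintro (_ | ⟨i, j⟩) h
    · simp [spD] at h
    · by_cases h0 : (j : ℕ) = 0
      · simp [spP, spider, h0]
      · simp only [spP, spider, h0, if_false, SimpleGraph.fromRel_adj]
        refine ⟨?_, Or.inr ⟨trivial, ?_⟩⟩
        · intro hh
          simp only [Option.some.injEq, Prod.mk.injEq, true_and, Fin.ext_iff] at hh
          omega
        · omega
  · rintro (_ | ⟨i, j⟩) h
    · simp [spD] at h
    · by_cases h0 : (j : ℕ) = 0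
      · simp [spP, spD, h0]
      · simp only [spP, spD, h0, if_false]
        omega
  · have half : ∀ i (j : Fin m) i' (j' : Fin m), i = i' ∧ (j : ℕ) + 1 = (j' : ℕ) →
        some (i, j) = spP p m (some (i', j')) := by
      rintro i j i' j' ⟨rfl, h⟩
      have : (j' : ℕ) ≠ 0 := by omega
      simp only [spP, this, if_false, Option.some.injEq, Prod.mk.injEq, true_and]
      apply Fin.ext; simp only; omega
    rintro (_ | ⟨i, j⟩) (_ | ⟨i', j'⟩) h
    · simp at h
    · simp [spider] at h
      simp [spD, spP, h]
    · simp [spider] at h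
      simp [spD, spP, h]
    · right
      simp only [spider, SimpleGraph.fromRel_adj] at h
      rcases h.2 with h | h
      · left; exact ⟨by simp [spD], half _ _ _ _ h⟩
      · right; exact ⟨by simp [spD], half _ _ _ _ h⟩
  · rintro (_ | ⟨i, j⟩) (_ | ⟨i', j'⟩) h1 h2 h3 <;> simp_all [spD]

theorem spider_rev (p m : ℕ) (hp : 2 ≤ p) (hm : 1 ≤ m) (hc : (spider p m).Connected) :
    ∀ l, IsLeaf (spider p m) l → ¬ KTwin (spider p m) (2 * m - 1) l := by
  have h := spider_rt p m
  have g1 : ∀ v, Option.map Prod.fst (rtop (spD p m) (spP p m) v) = Option.map Prod.fst v := by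
    refine h.top_inv (fun v => Option.map Prod.fst v) ?_
    rintro (_ | ⟨i, j⟩) hv
    · rfl
    · have : (j : ℕ) ≠ 0 := by simp [spD] at hv; omega
      simp [spP, this]
  refine h.rev1 (m := m) hc hm ?_ ?_ ?_ ?_ (some (⟨0, by omega⟩, ⟨m - 1, by omega⟩))
    (some (⟨1, by omega⟩, ⟨m - 1, by omega⟩)) (by simp only [spD]; omega)
    (by simp only [spD]; omega) ?_
  · rintro (_ | ⟨i, j⟩)
    · simp [spD]
    · simp only [spD]; omega
  · intro u v hu hv ht
    have := congrArg (Option.map Prod.fst) ht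
    rw [g1, g1] at this
    rcases u with (_ | ⟨i, j⟩) <;> rcases v with (_ | ⟨i', j'⟩)
    · rfl
    · simp at this
    · simp at this
    · simp at this
      simp only [spD] at hu hv
      have : j = j' := Fin.ext (by omega)
      simp_all
  · intro l hl
    rcases l with (_ | ⟨i, j⟩)
    · have := leaf_unique hl (u := some (⟨0, by omega⟩, ⟨0, by omega⟩))
        (v := some (⟨1, by omega⟩, ⟨0, by omega⟩)) (by simp [spider]) (by simp [spider])
      simp at this
    · by_contra hne
      simp only [spD] at hne
      have := leaf_unique hl (h.adjp _ (by simp [spD])) (v := some (i, ⟨j + 1, by omega⟩))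
        (by simp [spider, Fin.ext_iff])
      have h2 := h.dp (some (i, j)) (by simp [spD])
      rw [this] at h2
      simp only [spD] at h2
      omega
  · rintro (_ | _) (_ | _) h1 h2 <;> simp_all [spD]
  · intro hh
    have := congrArg (Option.map Prod.fst) hh
    rw [g1, g1] at this
    simp at this

def btD (p q m : ℕ) : Bool ⊕ ((Fin p ⊕ Fin q) × Fin m) → ℕ
  | Sum.inl _ => 0
  | Sum.inr (_, j) => (j : ℕ) + 1

def btS (p q m : ℕ) : Bool ⊕ ((Fin p ⊕ Fin q) × Fin m) → Bool
  | Sum.inl x => x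
  | Sum.inr (s, _) => s.isRight

def btP (p q m : ℕ) : Bool ⊕ ((Fin p ⊕ Fin q) × Fin m) → Bool ⊕ ((Fin p ⊕ Fin q) × Fin m)
  | Sum.inl x => Sum.inl x
  | Sum.inr (s, j) => if (j : ℕ) = 0 then Sum.inl s.isRight else Sum.inr (s, ⟨j - 1, by omega⟩)

def btL (p q m : ℕ) : Bool ⊕ ((Fin p ⊕ Fin q) × Fin m) → Option (Fin p ⊕ Fin q)
  | Sum.inl _ => none
  | Sum.inr (s, _) => some s

theorem bt_core (p q m : ℕ) (x : Bool) (s : Fin p ⊕ Fin q) (j : Fin m) :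
    (btree p q m).Adj (Sum.inl x) (Sum.inr (s, j)) ↔ (j : ℕ) = 0 ∧ s.isRight = x := by
  rcases x with _ | _ <;> rcases s with i | i <;> simp [btree]

theorem bt_leg (p q m : ℕ) (s s' : Fin p ⊕ Fin q) (j j' : Fin m) :
    (btree p q m).Adj (Sum.inr (s, j)) (Sum.inr (s', j')) ↔
      s = s' ∧ ((j : ℕ) + 1 = j' ∨ (j' : ℕ) + 1 = j) := by
  simp only [btree, SimpleGraph.fromRel_adj]
  constructor
  · rintro ⟨_, h | h⟩
    · exact ⟨h.1, Or.inl h.2⟩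
    · exact ⟨h.1.symm, Or.inr h.2⟩
  · rintro ⟨rfl, h⟩
    refine ⟨?_, ?_⟩
    · intro hh
      simp only [Sum.inr.injEq, Prod.mk.injEq, true_and] at hh
      rw [hh] at h
      omega
    · rcases h with h | h
      · exact Or.inl ⟨rfl, h⟩
      · exact Or.inr ⟨rfl, h⟩

theorem btree_rt (p q m : ℕ) : RT (btree p q m) (btD p q m) (btP p q m) := by
  refine ⟨?_, ?_, ?_, ?_, ?_⟩
  · rintro (_ | ⟨i, j⟩) h
    · rfl
    · simp [btD] at h
  · rintro (_ | ⟨s, j⟩) h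
    · simp [btD] at h
    · by_cases h0 : (j : ℕ) = 0
      · simp only [btP, h0, if_true]
        rw [SimpleGraph.adj_comm, bt_core]
        exact ⟨h0, rfl⟩
      · simp only [btP, h0, if_false]
        rw [bt_leg]
        refine ⟨rfl, ?_⟩
        simp only; omega
  · rintro (_ | ⟨i, j⟩) h
    · simp [btD] at h
    · by_cases h0 : (j : ℕ) = 0
      · simp [btP, btD, h0]
      · simp only [btP, btD, h0, if_false]
        omega
  · have half : ∀ i (j : Fin m) i' (j' : Fin m), i = i' ∧ (j : ℕ) + 1 = (j' : ℕ) →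
        Sum.inr (i, j) = btP p q m (Sum.inr (i', j')) := by
      rintro i j i' j' ⟨rfl, h⟩
      have : (j' : ℕ) ≠ 0 := by omega
      simp only [btP, this, if_false, Sum.inr.injEq, Prod.mk.injEq, true_and]
      apply Fin.ext; simp only; omega
    rintro (x | ⟨i, j⟩) (x' | ⟨i', j'⟩) h
    · simp [btD]
    · rw [bt_core] at h
      simp [btD, btP, h]
    · rw [SimpleGraph.adj_comm, bt_core] at h
      simp [btD, btP, h]
    · right
      rw [bt_leg] at h
      rcases h.2 with h2 | h2
      · left; exact ⟨by simp [btD], half _ _ _ _ ⟨h.1, h2⟩⟩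
      · right; exact ⟨by simp [btD], half _ _ _ _ ⟨h.1.symm, h2⟩⟩
  · rintro (x | ⟨i, j⟩) (x' | ⟨i', j'⟩) h1 h2 h3
    · rcases x with _ | _ <;> rcases x' with _ | _ <;> simp_all [btree]
    all_goals simp_all [btD]

theorem btree_rev (p q m : ℕ) (hp : 1 ≤ p) (hq : 1 ≤ q) (hm : 1 ≤ m)
    (hc : (btree p q m).Connected) :
    ∀ l, IsLeaf (btree p q m) l → ¬ KTwin (btree p q m) (2 * m - 1) l := by
  have h := btree_rt p q m
  have g1 : ∀ v, btL p q m (rtop (btD p q m) (btP p q m) v) = btL p q m v := by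
    refine h.top_inv _ ?_
    rintro (_ | ⟨i, j⟩) hv
    · rfl
    · have : (j : ℕ) ≠ 0 := by simp [btD] at hv; omega
      simp [btP, this, btL]
  have g2 : ∀ v, btS p q m (rbase (btD p q m) (btP p q m) v) = btS p q m v := by
    refine h.base_inv _ ?_
    rintro (_ | ⟨i, j⟩) hv
    · rfl
    · by_cases h0 : (j : ℕ) = 0 <;> simp [btP, h0, btS]
  refine h.rev2 (m := m) hc hm ?_ ?_ ?_ (Sum.inr (Sum.inl ⟨0, by omega⟩, ⟨m - 1, by omega⟩))
    (Sum.inr (Sum.inr ⟨0, by omega⟩, ⟨m - 1, by omega⟩)) (by simp only [btD]; omega)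
    (by simp only [btD]; omega) ?_
  · rintro (_ | ⟨i, j⟩)
    · simp [btD]
    · simp only [btD]; omega
  · intro u v hu hv ht
    have := congrArg (btL p q m) ht
    rw [g1, g1] at this
    rcases u with (_ | ⟨i, j⟩) <;> rcases v with (_ | ⟨i', j'⟩)
    · simp only [btD] at hu; omega
    · simp only [btD] at hu; omega
    · simp only [btD] at hv; omega
    · simp [btL] at this
      simp only [btD] at hu hv
      have : j = j' := Fin.ext (by omega)
      simp_all
  · intro l hl
    rcases l with (x | ⟨i, j⟩)
    · rcases x with _ | _
      · have := leaf_unique hl (u := Sum.inr (Sum.inl ⟨0, by omega⟩, ⟨0, by omega⟩))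
          (v := Sum.inl true) (by rw [bt_core]; simp) (by simp [btree])
        simp at this
      · have := leaf_unique hl (u := Sum.inr (Sum.inr ⟨0, by omega⟩, ⟨0, by omega⟩))
          (v := Sum.inl false) (by rw [bt_core]; simp) (by simp [btree])
        simp at this
    · by_contra hne
      simp only [btD] at hne
      have := leaf_unique hl (h.adjp _ (by simp [btD])) (v := Sum.inr (i, ⟨j + 1, by omega⟩))
        (by rw [bt_leg]; simp)
      have h2 := h.dp (Sum.inr (i, j)) (by simp [btD])
      rw [this] at h2
      simp only [btD] at h2
      omega
  · intro hh
    have := congrArg (btS p q m) hh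
    rw [g2, g2] at this
    simp [btS] at this

theorem fwd_spider {V : Type*} [Fintype V] {T : SimpleGraph V} (hT : T.IsTree) (m : ℕ)
    (hm : 2 ≤ m) (hd : gdiam T = 2 * m) (hno : ∀ l, IsLeaf T l → ¬ KTwin T (2 * m - 1) l) :
    ∃ p, 2 ≤ p ∧ Nonempty (T ≃g spider p m) := by
  classical
  have hc := hT.connected
  have := hc.nonempty
  obtain ⟨x, y, hxy⟩ := exists_gdiam T
  obtain ⟨c, hxc, hcy⟩ := conn_split hc x y m m (by omega)
  rw [SimpleGraph.dist_comm] at hxc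
  obtain ⟨par, h⟩ := tree_rt1 hT c
  have htop : rtop (T.dist c) par x ≠ rtop (T.dist c) par y := by
    intro hh
    have := h.dist_le_top hc x y hh
    omega
  have hle : ∀ v, T.dist c v ≤ m := by
    intro v
    by_cases e : rtop (T.dist c) par v = rtop (T.dist c) par x
    · have := h.le_dist hc v y (by rwa [e])
      have := dist_le_gdiam T v y
      omega
    · have := h.le_dist hc v x e
      have := dist_le_gdiam T v x
      omega
  have hcc : ∀ v, T.dist c v = 0 ↔ v = c := fun v => by
    rw [hc.dist_eq_zero_iff, eq_comm]
  have g := h.fwd1 hc hm hle c hcc x hxc hno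
  exact g.spider_iso c hcc _ _ (h.d_top x (by omega)) (h.d_top y (by omega)) htop

theorem fwd_btree {V : Type*} [Fintype V] {T : SimpleGraph V} (hT : T.IsTree) (m : ℕ)
    (hm : 2 ≤ m) (hd : gdiam T = 2 * m + 1)
    (hno : ∀ l, IsLeaf T l → ¬ KTwin T (2 * m - 1) l) :
    ∃ p₁ p₂, 1 ≤ p₁ ∧ 1 ≤ p₂ ∧ Nonempty (T ≃g btree p₁ p₂ m) := by
  classical
  have hc := hT.connected
  have := hc.nonempty
  obtain ⟨x, y, hxy⟩ := exists_gdiam T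
  obtain ⟨a, hxa, hay⟩ := conn_split hc x y m (1 + m) (by omega)
  obtain ⟨b, hab1, hby⟩ := conn_split hc a y 1 m (by omega)
  have hab := SimpleGraph.dist_eq_one_iff_adj.1 hab1
  rw [SimpleGraph.dist_comm] at hxa
  obtain ⟨par, h⟩ := tree_rt2 hT a b hab
  set δ : V → ℕ := fun v => min (T.dist a v) (T.dist b v) with hδ
  have hcc : ∀ v, δ v = 0 ↔ v = a ∨ v = b := by
    intro v
    rw [eq_comm (a := v), eq_comm (a := v), ← hc.dist_eq_zero_iff, ← hc.dist_eq_zero_iff]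
    simp only [hδ]
    omega
  have t1 := hc.dist_triangle (u := x) (v := b) (w := y)
  rw [SimpleGraph.dist_comm (u := x) (v := b)] at t1
  have hx : δ x = m := by simp only [hδ]; omega
  have hy : δ y = m := by simp only [hδ]; omega
  -- bases: distance from the other centre is larger
  have hxb : rbase δ par x = a := by
    rcases (hcc _).1 (h.d_base x) with e | e
    · exact e
    · have := h.dist_iter hc (δ x) x le_rfl
      change T.dist x (rbase δ par x) ≤ _ at this
      rw [e, SimpleGraph.dist_comm] at this
      omega
  have hyb : rbase δ par y = b := by
    rcases (hcc _).1 (h.d_base y) with e | e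
    · have := h.dist_iter hc (δ y) y le_rfl
      change T.dist y (rbase δ par y) ≤ _ at this
      rw [e, SimpleGraph.dist_comm] at this
      omega
    · exact e
  have hle : ∀ v, δ v ≤ m := by
    intro v
    have : ∀ z, δ z = m → rbase δ par v ≠ rbase δ par z → δ v ≤ m := by
      intro z hz hne
      have h1 := h.le_dist hc v z (fun hh => hne (h.base_of_top hh))
      have := dist_le_gdiam T v z
      rw [if_neg hne] at h1
      omega
    by_cases e : rbase δ par v = a
    · exact this y hy (by rw [hyb, e]; exact hab.ne)
    · exact this x hx (by rwa [hxb])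
  have g := h.fwd2 hc hm hle a b hab.ne hcc x y hx hy hxb hyb hno
  exact g.btree_iso a b hab.ne hcc _ _ (h.d_top x (by omega)) (h.d_top y (by omega))
    (by rw [RT.par_top (δ := δ) (par := par) x (by omega), hxb]) (by rw [RT.par_top (δ := δ) (par := par) y (by omega), hyb])

/-- For odd `k ≥ 3`:
(i) a tree of diameter `k + 1` has no `k`-twin leaf iff it is isomorphic to
`S_{p,⌊k/2⌋+1}` for some `p ≥ 2`;
(ii) a tree of diameter `k + 2` has no `k`-twin leaf iff it is isomorphic to
`B_{p₁,p₂,⌊k/2⌋+1}` for some `p₁, p₂ ≥ 1`. -/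
theorem stmt_10 (k : ℕ) (hk : 3 ≤ k) (hodd : Odd k) {V : Type} [Fintype V]
    (T : SimpleGraph V) (hT : T.IsTree) :
    (gdiam T = k + 1 →
      ((∀ ℓ, IsLeaf T ℓ → ¬ KTwin T k ℓ) ↔
        ∃ p, 2 ≤ p ∧ Nonempty (T ≃g spider p (k / 2 + 1)))) ∧
    (gdiam T = k + 2 →
      ((∀ ℓ, IsLeaf T ℓ → ¬ KTwin T k ℓ) ↔
        ∃ p₁ p₂, 1 ≤ p₁ ∧ 1 ≤ p₂ ∧ Nonempty (T ≃g btree p₁ p₂ (k / 2 + 1)))) := by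
  have hc := hT.connected
  obtain ⟨r, hr⟩ := hodd
  have hm : 2 ≤ k / 2 + 1 := by omega
  have hk2 : k = 2 * (k / 2 + 1) - 1 := by omega
  generalize k / 2 + 1 = m at hm hk2 ⊢
  subst hk2
  refine ⟨fun hd => ⟨fun hno => ?_, ?_⟩, fun hd => ⟨fun hno => ?_, ?_⟩⟩
  · exact fwd_spider hT m hm (by omega) hno
  · rintro ⟨p, hp, ⟨e⟩⟩
    exact iso_transfer e hc _ (spider_rev p m hp (by omega) (e.connected_iff.1 hc))
  · exact fwd_btree hT m hm (by omega) hno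
  · rintro ⟨p, q, hp, hq, ⟨e⟩⟩
    exact iso_transfer e hc _ (btree_rev p q m hp hq (by omega) (e.connected_iff.1 hc))
end
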